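/- arXiv:1510.09043 — 2 statements merged into one kernel-verified Lean document; each statement's English description precedes it below -/
import Mathlib

section
/- In the hypersurface setting of the context, there exist a field extension K of k and an arc φ : S[x] → K[[t]] in X = V(f) through the closed point ξ (with φ(x) and all φ(z_j) nonzero) such that r_{X,φ}/ord(φ) = ord(G_X^{(d)}). -/
open Polynomial
open scoped ENNReal

noncomputable section

namespace NashMult

/-- The `m`-adic order `ν(f)` of an element `f` of a ring: the largest `n` with `f ∈ m ^ n`. -/
def adicOrder {R : Type*} [CommRing R] (m : Ideal R) (f : R) : ℕ :=
  sSup {n : ℕ | f ∈ m ^ n}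

/-- A subalgebra `G ⊆ R[W]` is *graded* if it is spanned by its "monomials", i.e. it is closed
under taking homogeneous components.  This is the condition expressing that `G = ⊕ I_l W^l`
for a family of ideals `I_l` (with `I_0 = R` and `I_i · I_j ⊆ I_{i+j}` automatic). -/
def Graded {R : Type*} [CommRing R] (G : Subalgebra R (Polynomial R)) : Prop :=
  ∀ p ∈ G, ∀ n : ℕ, (C (p.coeff n) * X ^ n : Polynomial R) ∈ G

/-- A *Rees algebra* over `R`: a finitely generated graded subalgebra of `R[W]`. -/
def IsReesAlgebra {R : Type*} [CommRing R] (G : Subalgebra R (Polynomial R)) : Prop :=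
  G.FG ∧ Graded G

/-- The order of (the Rees algebra) `G` at the closed point of the local ring `(R, m)`:
`ord(G) = inf { ν(f)/n : f W^n a homogeneous element of G, n ≥ 1, f ≠ 0 }`
(with value `∞` for the empty infimum). -/
def reesOrder {R : Type*} [CommRing R] (m : Ideal R) (G : Subalgebra R (Polynomial R)) : ℝ≥0∞ :=
  sInf {q : ℝ≥0∞ | ∃ (f : R) (n : ℕ), f ≠ 0 ∧ 1 ≤ n ∧ (C f * X ^ n : Polynomial R) ∈ G ∧
    q = (adicOrder m f : ℝ≥0∞) / (n : ℝ≥0∞)}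

/-- `G = ⊕ I_l W^l` is *differentially closed* relative to a family `D` of derivations if
`I_{l+1} ⊆ I_l` and `D_j (I_l) ⊆ I_{l-1}` for all `l ≥ 1` and all `j`. -/
def DiffClosed {k R ι : Type*} [CommRing k] [CommRing R] [Algebra k R]
    (D : ι → Derivation k R R) (G : Subalgebra R (Polynomial R)) : Prop :=
  (∀ (f : R) (l : ℕ), 1 ≤ l → (C f * X ^ (l + 1) : Polynomial R) ∈ G →
      (C f * X ^ l : Polynomial R) ∈ G) ∧
  (∀ (f : R) (l : ℕ) (j : ι), (C f * X ^ (l + 1) : Polynomial R) ∈ G →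
      (C (D j f) * X ^ l : Polynomial R) ∈ G)

/-- `Diff(M)`: the smallest graded differentially closed subalgebra of `R[W]` containing the
set `M`. -/
def diffClosure {k R ι : Type*} [CommRing k] [CommRing R] [Algebra k R]
    (D : ι → Derivation k R R) (M : Set (Polynomial R)) : Subalgebra R (Polynomial R) :=
  sInf {G : Subalgebra R (Polynomial R) | M ⊆ ↑G ∧ Graded G ∧ DiffClosed D G}

/-- The image `ψ(G)` of a Rees algebra `G` over `R` under a homomorphism (arc) `ψ : R → K⟦t⟧`:
the Rees algebra over `K⟦t⟧` generated by all `ψ(g) W^l` for `g W^l` a homogeneous element of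
`G` with `ψ(g) ≠ 0`. -/
def arcImage {R A : Type*} [CommRing R] [CommRing A] (ψ : R → A)
    (G : Subalgebra R (Polynomial R)) : Subalgebra A (Polynomial A) :=
  Algebra.adjoin A {p : Polynomial A | ∃ (g : R) (l : ℕ),
    (C g * X ^ l : Polynomial R) ∈ G ∧ ψ g ≠ 0 ∧ p = C (ψ g) * X ^ l}

/-- The order `ord(ψ)` of an arc `ψ : R → K⟦t⟧`: the largest `n` such that
`ψ(m) ⊆ t^n` (`t` being the ideal `tI`). -/
def homOrd {R A : Type*} [CommRing R] [CommRing A] (m : Ideal R) (tI : Ideal A)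
    (ψ : R → A) : ℕ :=
  sSup {n : ℕ | ∀ s ∈ m, ψ s ∈ tI ^ n}

/-- The maximal ideal `(t)` of `K⟦t⟧`. -/
def tId (K : Type*) [CommRing K] : Ideal (PowerSeries K) :=
  Ideal.span {(PowerSeries.X : PowerSeries K)}

/-- The `t`-adic order on `K⟦t⟧`. -/
def tOrd {K : Type*} [CommRing K] (g : PowerSeries K) : ℕ :=
  adicOrder (tId K) g

/-- The family of ideals `I_l` of the graded algebra `G = ⊕ I_l W^l`. -/
def idealFam {R : Type*} [CommRing R] (G : Subalgebra R (Polynomial R)) (l : ℕ) : Ideal R :=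
  Submodule.comap (Polynomial.monomial l : R →ₗ[R] Polynomial R) (Subalgebra.toSubmodule G)

/-- The closed point of the local ring `(R, m)` belongs to the singular locus of
`G = ⊕ I_l W^l`, i.e. `ν(I_l) ≥ l` for all `l ≥ 1`. -/
def SingFam {R : Type*} [CommRing R] (m : Ideal R) (I : ℕ → Ideal R) : Prop :=
  ∀ l : ℕ, 1 ≤ l → I l ≤ m ^ l

/-- The transform `⊕ (I_l · T^{-l}) W^l` of a Rees algebra `⊕ I_l W^l` over a DVR with
uniformizer `T` (when the closed point lies in the singular locus, `I_l ⊆ (T^l)` and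
`I_l · T^{-l} = (I_l : (T^l))`). -/
def transformFam {R : Type*} [CommRing R] (T : R) (I : ℕ → Ideal R) : ℕ → Ideal R :=
  fun l => (I l).colon (Ideal.span {T ^ l})

/-- The persistance: the least number `κ` of transforms needed so that the closed point no
longer lies in the singular locus. -/
def persist {R : Type*} [CommRing R] (m : Ideal R) (T : R)
    (G : Subalgebra R (Polynomial R)) : ℕ :=
  sInf {κ : ℕ | ¬ SingFam m ((transformFam T)^[κ] (idealFam G))}

/-- The set of elements of a ring integral over a subset `s` (monic equation with
coefficients in `s`). -/
def intClos {A : Type*} [CommRing A] (s : Set A) : Set A :=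
  {p : A | ∃ q : Polynomial A, q.Monic ∧ (∀ n, q.coeff n ∈ s) ∧ Polynomial.eval p q = 0}


/-- The monic polynomial `f = x^b + B_{b-2} x^{b-2} + ⋯ + B_1 x + B_0` with coefficients
`B_j = Bc j` (only `j ≤ b - 2` is relevant). -/
def minPolyOf {S : Type*} [CommRing S] (b : ℕ) (Bc : ℕ → S) : Polynomial S :=
  Polynomial.X ^ b + ∑ j ∈ Finset.range (b - 1), Polynomial.C (Bc j) * Polynomial.X ^ j


/-- The maximal ideal `(z_1, …, z_d)` of the polynomial ring `k[z_1, …, z_d]`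
(the kernel of evaluation at the origin). -/
def mPoly (k : Type) [Field k] (d : ℕ) : Ideal (MvPolynomial (Fin d) k) :=
  RingHom.ker (MvPolynomial.aeval (fun _ => (0 : k)) : MvPolynomial (Fin d) k →ₐ[k] k)

instance {k : Type} [Field k] {d : ℕ} : (mPoly k d).IsMaximal :=
  RingHom.ker_isMaximal_of_surjective _ (fun a => ⟨MvPolynomial.C a, by simp⟩)

instance {k : Type} [Field k] {d : ℕ} : (mPoly k d).IsPrime :=
  (inferInstance : (mPoly k d).IsMaximal).isPrime

/-- `IsSLoc k d S` says that `S` is (identified with) the localization of `k[z_1, …, z_d]`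
at the maximal ideal `(z_1, …, z_d)`. -/
abbrev IsSLoc (k : Type) [Field k] (d : ℕ) (S : Type) [CommRing S]
    [Algebra (MvPolynomial (Fin d) k) S] : Prop :=
  IsLocalization.AtPrime S (mPoly k d)

/-- The element `z_j` of `S`. -/
def zvar (k : Type) [Field k] (d : ℕ) (S : Type) [CommRing S]
    [Algebra (MvPolynomial (Fin d) k) S] (j : Fin d) : S :=
  algebraMap (MvPolynomial (Fin d) k) S (MvPolynomial.X j)

/-- The maximal ideal `m = (z_1, …, z_d)` of the local ring `S`. -/
def mS (k : Type) [Field k] (d : ℕ) (S : Type) [CommRing S]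
    [Algebra (MvPolynomial (Fin d) k) S] : Ideal S :=
  (mPoly k d).map (algebraMap (MvPolynomial (Fin d) k) S)


variable (k : Type) [Field k] (d : ℕ)
variable (S : Type) [CommRing S] [Algebra (MvPolynomial (Fin d) k) S] [Algebra k S]

/-- The elimination algebra `G_X^{(d)} = Diff(S[B_{b-2} W^2, …, B_0 W^b])` over `S` of the
hypersurface `X = V(f)`, where `f = x^b + B_{b-2} x^{b-2} + ⋯ + B_0`. -/
def hypElim (D : Fin d → Derivation k S S) (b : ℕ) (Bc : ℕ → S) :
    Subalgebra S (Polynomial S) :=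
  diffClosure D {p : Polynomial S | ∃ i ≤ b - 2,
    p = Polynomial.C (Bc i) * Polynomial.X ^ (b - i)}

/-- An arc in the hypersurface `X = V(f)` through the closed point `ξ`: a `k`-algebra
homomorphism `φ : S[x] → K⟦t⟧` with `φ(f) = 0` and `φ(x), φ(z_1), …, φ(z_d) ∈ (t)`,
with `φ(x)` and all `φ(z_j)` nonzero. -/
def IsHypArc (b : ℕ) (Bc : ℕ → S) {K : Type} [Field K] [Algebra k K]
    (φ : Polynomial S →ₐ[k] PowerSeries K) : Prop :=
  φ (minPolyOf b Bc) = 0 ∧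
  φ Polynomial.X ∈ tId K ∧ (∀ j, φ (Polynomial.C (zvar k d S j)) ∈ tId K) ∧
  φ Polynomial.X ≠ 0 ∧ (∀ j, φ (Polynomial.C (zvar k d S j)) ≠ 0)

/-- The order of the arc `φ`: `ord(φ) = min {α_0, α_1, …, α_d}`, where
`α_0 = ord_t φ(x)` and `α_j = ord_t φ(z_j)`. -/
def hypArcOrd {K : Type} [Field K] [Algebra k K]
    (φ : Polynomial S →ₐ[k] PowerSeries K) : ℕ :=
  sInf (insert (tOrd (φ Polynomial.X))
    (Set.range fun j => tOrd (φ (Polynomial.C (zvar k d S j)))))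

/-- The contact algebra `G^{(1)}_{X_0,φ}`: the Rees algebra over `K⟦t⟧` generated by
`t^{α_0} W` together with all `φ(g) W^l`, for `g W^l` a homogeneous element of `G_X^{(d)}`
with `φ(g) ≠ 0`. -/
def hypContact (D : Fin d → Derivation k S S) (b : ℕ) (Bc : ℕ → S)
    {K : Type} [Field K] [Algebra k K] (φ : Polynomial S →ₐ[k] PowerSeries K) :
    Subalgebra (PowerSeries K) (Polynomial (PowerSeries K)) :=
  Algebra.adjoin (PowerSeries K)
    (insert
      (Polynomial.C ((PowerSeries.X : PowerSeries K) ^ tOrd (φ Polynomial.X)) * Polynomial.X)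
      {p : Polynomial (PowerSeries K) | ∃ (g : S) (l : ℕ),
        (Polynomial.C g * Polynomial.X ^ l : Polynomial S) ∈ hypElim k d S D b Bc ∧
        φ (Polynomial.C g) ≠ 0 ∧
        p = Polynomial.C (φ (Polynomial.C g)) * Polynomial.X ^ l})


theorem ps_mem_max_pow {K : Type*} [Field K] (n : ℕ) (x : PowerSeries K) :
    x ∈ (IsLocalRing.maximalIdeal (PowerSeries K)) ^ n ↔ ∀ m < n, PowerSeries.coeff m x = 0 := by
  rw [PowerSeries.maximalIdeal_eq_span_X, Ideal.span_singleton_pow, Ideal.mem_span_singleton,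
    PowerSeries.X_pow_dvd_iff]

theorem ps_complete {K : Type*} [Field K] :
    IsAdicComplete (IsLocalRing.maximalIdeal (PowerSeries K)) (PowerSeries K) where
  haus' x hx := by
    ext m
    have := hx (m + 1)
    rw [SModEq.zero, smul_eq_mul, Ideal.mul_top, ps_mem_max_pow] at this
    simpa using this m (by omega)
  prec' f hf := by
    refine ⟨PowerSeries.mk fun m => PowerSeries.coeff m (f (m + 1)), fun n => ?_⟩
    rw [SModEq.sub_mem, smul_eq_mul, Ideal.mul_top, ps_mem_max_pow]
    intro m hm
    have := hf (m := m + 1) (n := n) hm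
    rw [SModEq.sub_mem, smul_eq_mul, Ideal.mul_top, ps_mem_max_pow] at this
    have := this m (by omega)
    simp only [map_sub, PowerSeries.coeff_mk] at this ⊢
    rw [← neg_sub, this, neg_zero]

theorem hensel_factor {K : Type*} [Field K] (Q : Polynomial (PowerSeries K))
    (h0 : PowerSeries.constantCoeff (Q.coeff 0) = 0) (i : ℕ)
    (hi : PowerSeries.constantCoeff (Q.coeff i) ≠ 0) :
    ∃ f : Polynomial (PowerSeries K), f.Monic ∧ 1 ≤ f.natDegree ∧ f.natDegree ≤ i ∧ f ∣ Q := by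
  have := ps_complete (K := K)
  have key : ∀ a : PowerSeries K, IsLocalRing.residue _ a = 0 ↔
      PowerSeries.constantCoeff a = 0 := by
    intro a
    rw [IsLocalRing.residue_eq_zero_iff, ← PowerSeries.ker_coeff_eq_max_ideal, RingHom.mem_ker]
  have hne : (Q : PowerSeries (PowerSeries K)).map (IsLocalRing.residue _) ≠ 0 := by
    intro h
    have h2 := congrArg (PowerSeries.coeff i) h
    simp only [PowerSeries.coeff_map, Polynomial.coeff_coe, map_zero] at h2
    exact hi ((key _).1 h2)
  obtain ⟨f, h, H⟩ := PowerSeries.exists_isWeierstrassFactorization hne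
  have hdeg := H.natDegree_eq_toNat_order_map
  have hd := H.isDistinguishedAt
  refine ⟨f, hd.monic, ?_, ?_, ?_⟩
  · rw [hdeg]
    by_contra hlt
    have hz : ((Q : PowerSeries (PowerSeries K)).map (IsLocalRing.residue _)).order.toNat = 0 := by
      omega
    have := PowerSeries.coeff_order hne
    rw [hz] at this
    simp only [PowerSeries.coeff_map, Polynomial.coeff_coe] at this
    exact this ((key _).2 h0)
  · rw [hdeg]
    apply ENat.toNat_le_of_le_natCast
    apply PowerSeries.order_le
    simp only [PowerSeries.coeff_map, Polynomial.coeff_coe]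
    exact fun h => hi ((key _).1 h)
  · have hdiv := hd.isWeierstrassDivisorAt'
    have hfd : f.natDegree = ((f : PowerSeries (PowerSeries K)).map
        (Ideal.Quotient.mk (IsLocalRing.maximalIdeal (PowerSeries K)))).order.toNat := by
      have h := hd.coe_natDegree_eq_order_map (f : PowerSeries (PowerSeries K)) 1
        (by rw [PowerSeries.constantCoeff_one, ← Ideal.ne_top_iff_one]
            exact Ideal.IsMaximal.ne_top inferInstance) (by simp)
      rw [← h]; simp
    have hmod := Polynomial.modByMonic_add_div Q f
    have := hdiv.eq_of_mul_add_eq_mul_add (q := h) (q' := ((Q /ₘ f : Polynomial _) : PowerSeries _))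
      (r := 0) (r' := Q %ₘ f) (by rw [degree_zero]; exact WithBot.bot_lt_coe _)
      (by rw [← hfd, ← Polynomial.degree_eq_natDegree hd.monic.ne_zero]
          exact Polynomial.degree_modByMonic_lt _ hd.monic)
      (by rw [Polynomial.coe_zero, add_zero, ← H.eq_mul, ← Polynomial.coe_mul, ← Polynomial.coe_add, add_comm (f * _), hmod])
    rw [← Polynomial.modByMonic_eq_zero_iff_dvd hd.monic]
    exact this.2.symm

theorem newton_step {K : Type*} [Field K] [CharZero K] [IsAlgClosed K]
    (Q : Polynomial (PowerSeries K)) (b : ℕ) (hb : 1 ≤ b)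
    (hQ : Q.Monic) (hQd : Q.natDegree = b) (h1 : Q.coeff (b - 1) = 0) (i : ℕ) (hib : i < b)
    (hi : PowerSeries.constantCoeff (Q.coeff i) ≠ 0) :
    ∃ (a : PowerSeries K) (f : Polynomial (PowerSeries K)),
      f.Monic ∧ 1 ≤ f.natDegree ∧ f.natDegree < b ∧ f ∣ Q.comp (X + C a) := by
  set Qb : Polynomial K := Q.map PowerSeries.constantCoeff with hQb
  have hQbm : Qb.Monic := hQ.map _
  have hQbd : Qb.natDegree = b := by rw [hQb, hQ.natDegree_map, hQd]
  obtain ⟨a, ha⟩ := IsAlgClosed.exists_root Qb (by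
    rw [Polynomial.degree_eq_natDegree hQbm.ne_zero, hQbd]
    exact_mod_cast (by omega : b ≠ 0))
  have hmap : (Q.comp (X + C (PowerSeries.C a))).map PowerSeries.constantCoeff
      = Qb.comp (X + C a) := by
    rw [Polynomial.map_comp]; simp [hQb]
  set R := Q.comp (X + C (PowerSeries.C a)) with hR
  have hcoef : ∀ j, PowerSeries.constantCoeff (R.coeff j) = (Qb.comp (X + C a)).coeff j := by
    intro j; rw [← hmap, Polynomial.coeff_map]
  -- some lower coefficient is nonzero
  have hex : ∃ j < b, (Qb.comp (X + C a)).coeff j ≠ 0 := by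
    by_contra! hcon
    have hmon : (Qb.comp (X + C a)).Monic := hQbm.comp_X_add_C a
    have hnd : (Qb.comp (X + C a)).natDegree = b := by
      rw [Polynomial.natDegree_comp, hQbd, Polynomial.natDegree_X_add_C, mul_one]
    have hX : Qb.comp (X + C a) = X ^ b := by
      ext j
      rw [Polynomial.coeff_X_pow]
      rcases lt_trichotomy j b with h | h | h
      · rw [hcon j h, if_neg h.ne]
      · subst h; rw [if_pos rfl, ← hmon.coeff_natDegree, hnd]
      · rw [if_neg h.ne', Polynomial.coeff_eq_zero_of_natDegree_lt (by omega)]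
    have hQbe : Qb = (X - C a) ^ b := by
      have := congrArg (fun p => p.comp (X - C a)) hX
      simpa [Polynomial.comp_assoc] using this
    have hc1 : Qb.coeff (b - 1) = 0 := by rw [hQb, Polynomial.coeff_map, h1, map_zero]
    rw [hQbe, sub_eq_add_neg, ← C_neg, Polynomial.coeff_X_add_C_pow] at hc1
    have : b - (b - 1) = 1 := by omega
    rw [this, pow_one, Nat.choose_symm (by omega : 1 ≤ b), Nat.choose_one_right] at hc1
    have ha0 : a = 0 := by
      rcases mul_eq_zero.1 hc1 with h | h
      · simpa using h
      · exact absurd h (by exact_mod_cast (by omega : b ≠ 0))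
    rw [ha0] at hQbe
    apply hi
    rw [← Polynomial.coeff_map, ← hQb, hQbe]
    simp [Polynomial.coeff_X_pow, hib.ne]
  obtain ⟨j, hj, hjne⟩ := hex
  obtain ⟨f, hf1, hf2, hf3, hf4⟩ := hensel_factor R (by
    rw [hcoef, Polynomial.coeff_zero_eq_eval_zero, Polynomial.eval_comp]
    simpa using ha) j (by rw [hcoef]; exact hjne)
  exact ⟨PowerSeries.C a, f, hf1, hf2, by omega, hf4⟩


theorem exists_min_ratio (b : ℕ) (o : ℕ → ℕ) (P : ℕ → Prop) (h : ∃ i < b, P i) :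
    ∃ i < b, P i ∧ ∀ j < b, P j → o i * (b - j) ≤ o j * (b - i) := by
  classical
  obtain ⟨i, hi, hm⟩ := Finset.exists_min_image ((Finset.range b).filter P)
    (fun i => (o i : ℚ) / ((b - i : ℕ) : ℚ)) (by
      obtain ⟨i, h1, h2⟩ := h
      exact ⟨i, by simp [h1, h2]⟩)
  simp only [Finset.mem_filter, Finset.mem_range] at hi hm
  refine ⟨i, hi.1, hi.2, fun j hj hP => ?_⟩
  have := hm j ⟨hj, hP⟩
  have h1 : (0 : ℚ) < ((b - i : ℕ) : ℚ) := by exact_mod_cast (by omega : 0 < b - i)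
  have h2 : (0 : ℚ) < ((b - j : ℕ) : ℚ) := by exact_mod_cast (by omega : 0 < b - j)
  rw [div_le_div_iff₀ h1 h2] at this
  exact_mod_cast this

theorem puiseux {K : Type*} [Field K] [CharZero K] [IsAlgClosed K] (b : ℕ) :
    ∀ P : Polynomial (PowerSeries K), P.Monic → P.natDegree = b → 1 ≤ b →
    ∃ (n : ℕ) (hn : n ≠ 0) (r : PowerSeries K),
      P.eval₂ (PowerSeries.expand n hn : PowerSeries K →ₐ[K] PowerSeries K).toRingHom r = 0 := by
  induction b using Nat.strong_induction_on with
  | _ b ih =>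
  -- reduced case
  have red : ∀ P : Polynomial (PowerSeries K), P.Monic → P.natDegree = b → 1 ≤ b →
      P.coeff (b - 1) = 0 →
      ∃ (n : ℕ) (hn : n ≠ 0) (r : PowerSeries K),
      P.eval₂ (PowerSeries.expand n hn : PowerSeries K →ₐ[K] PowerSeries K).toRingHom r = 0 := by
    intro P hP hd hb h1
    by_cases hz : ∃ i < b, P.coeff i ≠ 0
    swap
    · push Not at hz
      refine ⟨1, one_ne_zero, 0, ?_⟩
      rw [Polynomial.eval₂_at_zero, hz 0 (by omega), map_zero]
    obtain ⟨i, hib, hi0, hmin⟩ := exists_min_ratio b (fun i => (P.coeff i).order.toNat)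
      (fun i => P.coeff i ≠ 0) hz
    set N := (P.coeff i).order.toNat with hN
    set c := b - i with hc
    have hc0 : c ≠ 0 := by omega
    have hdiv : ∀ j, ∃ q : PowerSeries K, j ≤ b →
        PowerSeries.expand c hc0 (P.coeff j) = PowerSeries.X ^ (N * (b - j)) * q := by
      intro j
      by_cases hjb : j ≤ b
      swap
      · exact ⟨0, fun h => absurd h hjb⟩
      suffices PowerSeries.X ^ (N * (b - j)) ∣ PowerSeries.expand c hc0 (P.coeff j) by
        obtain ⟨q, hq⟩ := this
        exact ⟨q, fun _ => hq⟩
      by_cases hj0 : P.coeff j = 0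
      · rw [hj0, map_zero]; exact dvd_zero _
      by_cases hjb' : j = b
      · subst hjb'; simp
      have h2 : N * (b - j) ≤ (P.coeff j).order.toNat * c := hmin j (by omega) hj0
      obtain ⟨u, hu⟩ := PowerSeries.X_pow_order_dvd (φ := P.coeff j)
      rw [hu, map_mul, map_pow, PowerSeries.expand_X, ← pow_mul, mul_comm c]
      exact Dvd.dvd.mul_right (pow_dvd_pow _ h2) _
    choose q hq using hdiv
    have hqb : q b = 1 := by
      have := hq b le_rfl
      rw [← hd, hP.coeff_natDegree] at this
      simpa [hd] using this.symm
    have hX0 : ∀ m, (PowerSeries.X : PowerSeries K) ^ m ≠ 0 := fun m =>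
      pow_ne_zero _ PowerSeries.X_ne_zero
    set Q : Polynomial (PowerSeries K) := ∑ j ∈ Finset.range (b + 1), C (q j) * X ^ j with hQ
    have hQc : ∀ j, Q.coeff j = if j ≤ b then q j else 0 := by
      intro j
      simp only [hQ, Polynomial.finsetSum_coeff, Polynomial.coeff_C_mul_X_pow]
      rw [Finset.sum_ite_eq]
      simp
    have hQle : Q.natDegree ≤ b := by
      rw [Polynomial.natDegree_le_iff_coeff_eq_zero]
      intro j hj
      rw [hQc, if_neg (by omega)]
    have hQm : Q.Monic := Polynomial.monic_of_natDegree_le_of_coeff_eq_one b hQle (by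
      rw [hQc, if_pos le_rfl, hqb])
    have hQd : Q.natDegree = b := by
      apply le_antisymm hQle
      apply Polynomial.le_natDegree_of_ne_zero
      rw [hQc, if_pos le_rfl, hqb]; exact one_ne_zero
    have hQ1 : Q.coeff (b - 1) = 0 := by
      rw [hQc, if_pos (by omega)]
      have := hq (b - 1) (by omega)
      rw [h1, map_zero] at this
      exact (mul_eq_zero.1 this.symm).resolve_left (hX0 _)
    have hQi : PowerSeries.constantCoeff (Q.coeff i) ≠ 0 := by
      rw [hQc, if_pos hib.le]
      have := congrArg (PowerSeries.coeff (c * N)) (hq i hib.le)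
      rw [PowerSeries.coeff_expand_mul, mul_comm N, ← hc] at this
      have h3 := PowerSeries.coeff_X_pow_mul (q i) (c * N) 0
      rw [zero_add, PowerSeries.coeff_zero_eq_constantCoeff_apply] at h3
      rw [← h3, ← this]
      exact PowerSeries.coeff_order hi0
    obtain ⟨a, f, hfm, hf1, hfb, g, hg⟩ := newton_step Q b hb hQm hQd hQ1 i hib hQi
    obtain ⟨n, hn, r, hr⟩ := ih f.natDegree hfb f hfm rfl hf1
    set σ := (PowerSeries.expand n hn : PowerSeries K →ₐ[K] PowerSeries K).toRingHom with hσ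
    -- root of Q
    have hroot : Q.eval₂ σ (r + σ a) = 0 := by
      have := congrArg (Polynomial.eval₂ σ r) hg
      rw [Polynomial.eval₂_mul, hr, zero_mul, Polynomial.eval₂_comp] at this
      simpa using this
    refine ⟨n * c, mul_ne_zero hn hc0, σ (PowerSeries.X ^ N) * (r + σ a), ?_⟩
    have hcomp : ∀ p, (PowerSeries.expand (n * c) (mul_ne_zero hn hc0) : PowerSeries K →ₐ[K] PowerSeries K).toRingHom p
        = σ (PowerSeries.expand c hc0 p) := fun p => PowerSeries.expand_mul n hn c hc0 p
    rw [Polynomial.eval₂_eq_sum_range, hd]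
    have hterm : ∀ j ∈ Finset.range (b + 1),
        (PowerSeries.expand (n * c) (mul_ne_zero hn hc0) : PowerSeries K →ₐ[K] PowerSeries K).toRingHom (P.coeff j) * (σ (PowerSeries.X ^ N) * (r + σ a)) ^ j
        = σ (PowerSeries.X ^ (N * b)) * (σ (Q.coeff j) * (r + σ a) ^ j) := by
      intro j hj
      have hjb : j ≤ b := by simpa [Nat.lt_succ_iff] using hj
      rw [hcomp, hq j hjb, hQc, if_pos hjb, map_mul, mul_pow, ← map_pow, ← pow_mul]
      have : N * b = N * (b - j) + N * j := by rw [← mul_add]; congr 1; omega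
      rw [this, pow_add, map_mul]
      ring
    rw [Finset.sum_congr rfl hterm, ← Finset.mul_sum]
    rw [Polynomial.eval₂_eq_sum_range, hQd] at hroot
    rw [hroot, mul_zero]
  intro P hP hd hb
  have hbK : (b : K) ≠ 0 := by exact_mod_cast (by omega : b ≠ 0)
  set s : PowerSeries K := PowerSeries.C ((b : K)⁻¹) * P.coeff (b - 1) with hs
  have hbs : (b : PowerSeries K) * s = P.coeff (b - 1) := by
    rw [hs, ← mul_assoc]
    have : (b : PowerSeries K) = PowerSeries.C (b : K) := by simp
    rw [this, ← map_mul, mul_inv_cancel₀ hbK, map_one, one_mul]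
  have hsub : X - C s = X + C (-s) := by rw [C_neg, sub_eq_add_neg]
  obtain ⟨n, hn, r, hr⟩ := red (P.comp (X - C s)) (by rw [hsub]; exact hP.comp_X_add_C _)
    (by rw [Polynomial.natDegree_comp, hd, Polynomial.natDegree_X_sub_C, mul_one]) hb (by
      rw [Polynomial.comp_eq_sum_left, Polynomial.sum_over_range _ (by simp), hd, 
        Polynomial.finsetSum_coeff, Finset.sum_range_succ]
      obtain ⟨e, rfl⟩ : ∃ e, b = e + 1 := ⟨b - 1, by omega⟩
      rw [Finset.sum_range_succ]
      simp only [Nat.add_sub_cancel] at hbs ⊢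
      rw [Finset.sum_eq_zero]
      · simp only [hsub, Polynomial.coeff_C_mul, Polynomial.coeff_X_add_C_pow]
        have hl : P.coeff (e + 1) = 1 := by rw [← hd, hP.coeff_natDegree]
        rw [hl, ← hbs]
        simp
        ring
      · intro j hj
        simp only [Finset.mem_range] at hj
        rw [hsub, Polynomial.coeff_C_mul, Polynomial.coeff_X_add_C_pow,
          Nat.choose_eq_zero_of_lt hj]
        simp)
  rw [Polynomial.eval₂_comp] at hr
  exact ⟨n, hn, _, hr⟩
theorem mem_iff_le_adicOrder {R : Type*} [CommRing R] (I : Ideal R) (f : R)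
    (h : ∃ n, f ∉ I ^ n) (n : ℕ) : f ∈ I ^ n ↔ n ≤ adicOrder I f := by
  obtain ⟨M, hM⟩ := h
  have hb : BddAbove {n : ℕ | f ∈ I ^ n} := by
    refine ⟨M, fun m hm => ?_⟩
    by_contra hlt
    exact hM (Ideal.pow_le_pow_right (by omega) hm)
  constructor
  · exact fun h => le_csSup hb h
  · intro hn
    have : adicOrder I f ∈ {n : ℕ | f ∈ I ^ n} := Nat.sSup_mem ⟨0, by simp⟩ hb
    exact Ideal.pow_le_pow_right hn this

theorem reesOrder_eq {R : Type*} [CommRing R] (I : Ideal R) (G : Subalgebra R (Polynomial R))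
    (hI : ∀ f : R, f ≠ 0 → ∃ n, f ∉ I ^ n) (N c : ℕ) (hc : 0 < c)
    (hG : ∀ f l, (C f * X ^ l : Polynomial R) ∈ G → f ∈ I ^ ((N * l) ⌈/⌉ c))
    (g : R) (hg0 : g ≠ 0) (hg : (C g * X ^ c : Polynomial R) ∈ G) (hgN : g ∉ I ^ (N + 1)) :
    reesOrder I G = (N : ℝ≥0∞) / (c : ℝ≥0∞) := by
  have lower : ∀ f l, f ≠ 0 → (C f * X ^ l : Polynomial R) ∈ G → N * l ≤ c * adicOrder I f := by
    intro f l hf h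
    rw [← ceilDiv_le_iff_le_mul hc, ← mem_iff_le_adicOrder I f (hI f hf)]
    exact hG f l h
  apply le_antisymm
  · apply sInf_le
    refine ⟨g, c, hg0, hc, hg, ?_⟩
    have h1 : adicOrder I g < N + 1 := by
      by_contra h
      exact hgN ((mem_iff_le_adicOrder I g (hI g hg0) _).2 (by omega))
    have h2 := lower g c hg0 hg
    have h3 : N ≤ adicOrder I g := by
      rw [mul_comm] at h2; exact Nat.le_of_mul_le_mul_left h2 hc
    rw [show adicOrder I g = N by omega]
  · apply le_sInf
    rintro q ⟨f, l, hf, hl, hfG, rfl⟩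
    have h := lower f l hf hfG
    rw [ENNReal.div_le_iff (by exact_mod_cast hc.ne') (by simp), mul_comm, ← mul_div_assoc,
      ENNReal.le_div_iff_mul_le (Or.inl (by exact_mod_cast (by omega : l ≠ 0))) (Or.inl (by simp))]
    exact_mod_cast h

/-- The subalgebra of all `p` whose `n`-th coefficient has order at least `N * n / c`. -/
def wAlg {R : Type*} [CommRing R] (I : Ideal R) (N c : ℕ) (hc : 0 < c) :
    Subalgebra R (Polynomial R) where
  carrier := {p | ∀ n, p.coeff n ∈ I ^ ((N * n) ⌈/⌉ c)}
  add_mem' := fun ha hb n => by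
    rw [Polynomial.coeff_add]; exact Ideal.add_mem _ (ha n) (hb n)
  mul_mem' := fun {a b} ha hb n => by
    rw [Polynomial.coeff_mul]
    refine Ideal.sum_mem _ fun x hx => ?_
    have hx' : x.1 + x.2 = n := by simpa using hx
    have h1 := Ideal.mul_mem_mul (ha x.1) (hb x.2)
    rw [← pow_add] at h1
    refine Ideal.pow_le_pow_right ?_ h1
    rw [ceilDiv_le_iff_le_mul hc, mul_add, ← hx', mul_add]
    exact add_le_add ((ceilDiv_le_iff_le_mul hc).1 le_rfl) ((ceilDiv_le_iff_le_mul hc).1 le_rfl)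
  algebraMap_mem' := fun r n => by
    rw [Polynomial.algebraMap_apply, Algebra.algebraMap_self, RingHom.id_apply, Polynomial.coeff_C]
    split_ifs with h
    · subst h; simp
    · exact Ideal.zero_mem _

theorem mem_wAlg {R : Type*} [CommRing R] (I : Ideal R) (N c : ℕ) (hc : 0 < c) (f : R) (l : ℕ) :
    (C f * X ^ l : Polynomial R) ∈ wAlg I N c hc ↔ f ∈ I ^ ((N * l) ⌈/⌉ c) := by
  constructor
  · intro h
    have := h l
    simpa using this
  · intro h n
    rw [Polynomial.coeff_C_mul_X_pow]
    split_ifs with hn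
    · subst hn; exact h
    · exact Ideal.zero_mem _

theorem deriv_mem {k R : Type*} [CommRing k] [CommRing R] [Algebra k R] (D : Derivation k R R)
    (I : Ideal R) (n : ℕ) : ∀ f ∈ I ^ (n + 1), D f ∈ I ^ n := by
  induction n with
  | zero => intro f _; simp
  | succ n ih =>
    intro f hf
    rw [pow_succ] at hf
    refine Submodule.mul_induction_on hf ?_ ?_
    · intro a ha b hb
      rw [Derivation.leibniz, smul_eq_mul, smul_eq_mul]
      refine Ideal.add_mem _ (Ideal.mul_mem_right _ _ ha) ?_
      rw [pow_succ, mul_comm b]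
      exact Ideal.mul_mem_mul (ih a ha) hb
    · intro a b ha hb
      rw [map_add]; exact Ideal.add_mem _ ha hb

theorem wAlg_diffClosed {k R ι : Type*} [CommRing k] [CommRing R] [Algebra k R]
    (D : ι → Derivation k R R) (I : Ideal R) (N c : ℕ) (hc : 0 < c) (hcN : c ≤ N) :
    DiffClosed D (wAlg I N c hc) := by
  constructor
  · intro f l _ h
    rw [mem_wAlg] at h ⊢
    refine Ideal.pow_le_pow_right ?_ h
    rw [ceilDiv_le_iff_le_mul hc]
    exact le_trans (Nat.mul_le_mul_left _ (by omega)) ((ceilDiv_le_iff_le_mul hc).1 le_rfl)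
  · intro f l j h
    rw [mem_wAlg] at h ⊢
    apply deriv_mem
    refine Ideal.pow_le_pow_right ?_ h
    have h1 : N * (l + 1) ≤ c * ((N * (l + 1)) ⌈/⌉ c) := (ceilDiv_le_iff_le_mul hc).1 le_rfl
    set m := (N * (l + 1)) ⌈/⌉ c with hm
    have hm1 : m ≠ 0 := by
      intro h0
      rw [h0] at h1
      have : 0 < N * (l + 1) := Nat.mul_pos (by omega) (by omega)
      omega
    obtain ⟨m', hm'⟩ : ∃ m', m = m' + 1 := ⟨m - 1, by omega⟩
    rw [hm'] at h1 ⊢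
    have : (N * l) ⌈/⌉ c ≤ m' := by
      rw [ceilDiv_le_iff_le_mul hc]
      nlinarith
    omega

theorem wAlg_graded {R : Type*} [CommRing R] (I : Ideal R) (N c : ℕ) (hc : 0 < c) :
    Graded (wAlg I N c hc) := fun _ hp n => (mem_wAlg _ _ _ _ _ _).2 (hp n)

theorem tId_pow_mem {K : Type*} [Field K] (n : ℕ) (g : PowerSeries K) :
    g ∈ tId K ^ n ↔ PowerSeries.X ^ n ∣ g := by
  rw [tId, Ideal.span_singleton_pow, Ideal.mem_span_singleton]

theorem tId_krull {K : Type*} [Field K] (g : PowerSeries K) (hg : g ≠ 0) :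
    ∃ n, g ∉ tId K ^ n := by
  by_contra! h
  apply hg
  ext m
  have := h (m + 1)
  rw [tId_pow_mem, PowerSeries.X_pow_dvd_iff] at this
  simpa using this m (by omega)

theorem le_tOrd {K : Type*} [Field K] (g : PowerSeries K) (hg : g ≠ 0) (n : ℕ) :
    n ≤ tOrd g ↔ PowerSeries.X ^ n ∣ g := by
  rw [tOrd, ← mem_iff_le_adicOrder _ _ (tId_krull g hg), tId_pow_mem]

theorem expand_dvd {K : Type*} [Field K] (n : ℕ) (hn : n ≠ 0) (m : ℕ) (g : PowerSeries K)
    (h : PowerSeries.X ^ m ∣ g) : PowerSeries.X ^ (n * m) ∣ PowerSeries.expand n hn g := by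
  obtain ⟨u, rfl⟩ := h
  rw [map_mul, map_pow, PowerSeries.expand_X, ← pow_mul]
  exact dvd_mul_right _ _

theorem expand_not_dvd {K : Type*} [Field K] (n : ℕ) (hn : n ≠ 0) (m : ℕ) (g : PowerSeries K)
    (h : ¬ PowerSeries.X ^ (m + 1) ∣ g) :
    ¬ PowerSeries.X ^ (n * m + 1) ∣ PowerSeries.expand n hn g := by
  rw [PowerSeries.X_pow_dvd_iff] at h ⊢
  push Not at h ⊢
  obtain ⟨e, he, hne⟩ := h
  refine ⟨n * e, ?_, ?_⟩
  · have := Nat.mul_le_mul_left n (by omega : e ≤ m)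
    omega
  · rwa [PowerSeries.coeff_expand_mul]

theorem root_order {K : Type*} [Field K] (b M c : ℕ) (hb : 2 ≤ b) (β : ℕ → PowerSeries K)
    (e : ℕ → ℕ) (he : ∀ j ≤ b - 2, M * (b - j) ≤ c * e j)
    (hβ : ∀ j ≤ b - 2, PowerSeries.X ^ (e j) ∣ β j) (r : PowerSeries K) (hr : r ≠ 0)
    (heq : r ^ b + ∑ j ∈ Finset.range (b - 1), β j * r ^ j = 0) : M ≤ tOrd r * c := by
  by_contra! hlt
  set α := tOrd r with hα
  obtain ⟨u, hu⟩ := (le_tOrd r hr α).1 le_rfl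
  have h1 : PowerSeries.X ^ (α * b + 1) ∣ r ^ b := by
    rw [eq_neg_of_add_eq_zero_left heq, dvd_neg]
    refine Finset.dvd_sum fun j hj => ?_
    have hj' : j < b - 1 := by simpa using hj
    have h2 : PowerSeries.X ^ (e j + α * j) ∣ β j * r ^ j := by
      rw [pow_add]
      refine mul_dvd_mul (hβ j (by omega)) ?_
      rw [pow_mul]
      exact pow_dvd_pow_of_dvd ⟨u, hu⟩ _
    refine dvd_trans (pow_dvd_pow _ ?_) h2
    have h3 := he j (by omega)
    obtain ⟨s, rfl⟩ : ∃ s, b = j + s := ⟨b - j, by omega⟩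
    rw [Nat.add_sub_cancel_left] at h3
    have hs : 0 < s := by omega
    have h4 : α * c * s < c * e j := lt_of_lt_of_le (Nat.mul_lt_mul_of_pos_right hlt hs) h3
    have h5 : α * s < e j := by
      have : c * (α * s) < c * e j := by rw [← mul_assoc, mul_comm c]; exact h4
      exact lt_of_mul_lt_mul_left this (Nat.zero_le _)
    rw [mul_add]; omega
  rw [hu, mul_pow, ← pow_mul, pow_succ] at h1
  have h6 : (PowerSeries.X : PowerSeries K) ∣ u ^ b :=
    (mul_dvd_mul_iff_left (pow_ne_zero _ PowerSeries.X_ne_zero)).1 h1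
  have h7 := PowerSeries.X_prime.dvd_of_dvd_pow h6
  have h8 : PowerSeries.X ^ (α + 1) ∣ r := by
    rw [hu, pow_succ]; exact mul_dvd_mul_left _ h7
  have := (le_tOrd r hr (α + 1)).2 h8
  omega

section arc

variable {k : Type} [Field k] {d : ℕ} (K : Type) [Field K] [Algebra k K]

/-- Evaluation along the line `z_j = c_j t`. -/
def lineEv (c : Fin d → k) : MvPolynomial (Fin d) k →ₐ[k] PowerSeries K :=
  MvPolynomial.aeval fun j => PowerSeries.C (algebraMap k K (c j)) * PowerSeries.X

theorem coeff_lineEv (c : Fin d → k) (p : MvPolynomial (Fin d) k) (e : ℕ) :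
    PowerSeries.coeff e (lineEv K c p) =
      algebraMap k K (MvPolynomial.eval c (MvPolynomial.homogeneousComponent e p)) := by
  induction p using MvPolynomial.induction_on' with
  | monomial u a =>
    have h1 : lineEv K c (MvPolynomial.monomial u a) =
        PowerSeries.monomial u.degree (algebraMap k K (MvPolynomial.eval c (MvPolynomial.monomial u a))) := by
      rw [lineEv, MvPolynomial.aeval_monomial, MvPolynomial.eval_monomial, map_mul,
        Finsupp.prod, Finsupp.prod]
      simp only [mul_pow]
      rw [Finset.prod_mul_distrib, Finset.prod_pow_eq_pow_sum, map_prod]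
      ext m
      rw [← mul_assoc, ← Finsupp.degree_apply, PowerSeries.coeff_mul_X_pow', PowerSeries.coeff_monomial]
      simp only [← map_pow, ← map_prod, ← map_mul]
      rw [IsScalarTower.algebraMap_apply k K (PowerSeries K), PowerSeries.algebraMap_eq, ← map_mul, PowerSeries.coeff_C]
      have : (m = u.degree) ↔ (u.degree ≤ m ∧ m - u.degree = 0) := by omega
      simp only [this]
      split_ifs <;> simp_all
    rw [h1, PowerSeries.coeff_monomial]
    split_ifs with h
    · rw [MvPolynomial.homogeneousComponent_of_mem
        (MvPolynomial.isHomogeneous_monomial (n := u.degree) a rfl), if_pos h]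
    · rw [MvPolynomial.homogeneousComponent_of_mem
        (MvPolynomial.isHomogeneous_monomial (n := u.degree) a rfl), if_neg h]
      simp
  | add p q hp hq => simp only [map_add, hp, hq]

theorem constantCoeff_lineEv (c : Fin d → k) (p : MvPolynomial (Fin d) k) :
    PowerSeries.constantCoeff (lineEv K c p) =
      algebraMap k K (MvPolynomial.aeval (fun _ => (0 : k)) p) := by
  rw [← PowerSeries.coeff_zero_eq_constantCoeff_apply, coeff_lineEv,
    MvPolynomial.homogeneousComponent_zero]
  congr 1
  have : (fun _ : Fin d => (0 : k)) = 0 := rfl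
  rw [MvPolynomial.eval_C, this, MvPolynomial.aeval_zero]
  rfl

variable (S : Type) [CommRing S] [Algebra (MvPolynomial (Fin d) k) S] [Algebra k S]
  [IsScalarTower k (MvPolynomial (Fin d) k) S] [IsSLoc k d S]

theorem lineEv_unit (c : Fin d → k) (y : (mPoly k d).primeCompl) :
    IsUnit (lineEv K c (y : MvPolynomial (Fin d) k)) := by
  rw [PowerSeries.isUnit_iff_constantCoeff, constantCoeff_lineEv, isUnit_iff_ne_zero]
  intro h
  apply y.2
  rw [map_eq_zero] at h
  exact h

/-- The extension of `lineEv` to `S`. -/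
def lineS (c : Fin d → k) : S →ₐ[k] PowerSeries K :=
  IsLocalization.liftAlgHom (M := (mPoly k d).primeCompl) (f := lineEv K c) (lineEv_unit K c)

theorem lineS_algebraMap (c : Fin d → k) (p : MvPolynomial (Fin d) k) :
    lineS K S c (algebraMap _ S p) = lineEv K c p := by
  rw [lineS, IsLocalization.liftAlgHom_apply, IsLocalization.lift_eq]
  rfl

theorem lineS_mem (c : Fin d → k) (n : ℕ) (s : S) (hs : s ∈ mS k d S ^ n) :
    PowerSeries.X ^ n ∣ lineS K S c s := by
  have h1 : mS k d S ≤ (tId K).comap (lineS K S c) := by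
    rw [mS, Ideal.map_le_iff_le_comap]
    intro p hp
    rw [Ideal.mem_comap, Ideal.mem_comap, lineS_algebraMap, tId, Ideal.mem_span_singleton,
      PowerSeries.X_dvd_iff, constantCoeff_lineEv]
    rw [mPoly, RingHom.mem_ker] at hp
    have hp' : MvPolynomial.aeval (fun _ => (0 : k)) p = 0 := hp
    rw [hp', map_zero]
  rw [← tId_pow_mem]
  exact Ideal.le_comap_pow _ n (Ideal.pow_right_mono h1 n hs)

theorem mS_ne_top : mS k d S ≠ ⊤ := by
  intro h
  have h1 : (1 : S) ∈ mS k d S ^ 1 := by rw [h]; simp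
  have := lineS_mem k S (0 : Fin d → k) 1 1 h1
  rw [map_one, pow_one, PowerSeries.X_dvd_iff] at this
  simp at this

theorem mS_krull [IsDomain S] (s : S) (hs : s ≠ 0) : ∃ n, s ∉ mS k d S ^ n := by
  have : IsNoetherianRing S := IsLocalization.isNoetherianRing (mPoly k d).primeCompl S inferInstance
  have h := Ideal.iInf_pow_eq_bot_of_isDomain (mS k d S) (mS_ne_top S)
  by_contra! hcon
  apply hs
  rw [← Ideal.mem_bot, ← h]
  exact Ideal.mem_iInf.2 hcon

theorem exists_generic (B : S) (N : ℕ) (hB : B ∉ mS k d S ^ (N + 1)) :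
    ∃ F : MvPolynomial (Fin d) k, F ≠ 0 ∧ ∀ c, MvPolynomial.eval c F ≠ 0 →
      ¬ PowerSeries.X ^ (N + 1) ∣ lineS K S c B := by
  obtain ⟨⟨p, s⟩, hps⟩ := IsLocalization.surj (mPoly k d).primeCompl B
  simp only at hps
  have hex : ∃ e ≤ N, MvPolynomial.homogeneousComponent e p ≠ 0 := by
    by_contra! hcon
    apply hB
    have hp : p ∈ mPoly k d ^ (N + 1) := by
      have hle : MvPolynomial.idealOfVars (Fin d) k ≤ mPoly k d := by
        rw [MvPolynomial.idealOfVars, Ideal.span_le]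
        rintro _ ⟨j, rfl⟩
        simp [mPoly, RingHom.mem_ker]
      refine Ideal.pow_right_mono hle _ ?_
      rw [MvPolynomial.mem_pow_idealOfVars_iff']
      intro x hx
      have h1 := congrArg (MvPolynomial.coeff x) (hcon x.degree (by omega))
      rw [MvPolynomial.coeff_homogeneousComponent, if_pos rfl] at h1
      simpa using h1
    have h2 : algebraMap _ S p ∈ mS k d S ^ (N + 1) := by
      rw [mS, ← Ideal.map_pow]
      exact Ideal.mem_map_of_mem _ hp
    rw [← hps] at h2
    exact (Ideal.mul_unit_mem_iff_mem _ (IsLocalization.map_units S s)).1 h2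
  obtain ⟨e, he, hne⟩ := hex
  refine ⟨_, hne, fun c hc hdvd => hc ?_⟩
  have h3 : PowerSeries.X ^ (N + 1) ∣ lineEv K c p := by
    rw [← lineS_algebraMap K S, ← hps, map_mul]
    exact Dvd.dvd.mul_right hdvd _
  rw [PowerSeries.X_pow_dvd_iff] at h3
  have := h3 e (by omega)
  rw [coeff_lineEv, map_eq_zero] at this
  exact this

end arc
theorem main_aux
    (k : Type) [Field k] [CharZero k] (d : ℕ) (hd : 1 ≤ d)
    (S : Type) [CommRing S] [IsDomain S] [Algebra (MvPolynomial (Fin d) k) S]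
    [Algebra k S] [IsScalarTower k (MvPolynomial (Fin d) k) S] [IsSLoc k d S]
    (D : Fin d → Derivation k S S)
    (b : ℕ) (hb : 2 ≤ b) (Bc : ℕ → S)
    (hmem : ∀ i ≤ b - 2, Bc i ∈ (mS k d S) ^ (b - i))
    (hnz : ∃ i ≤ b - 2, Bc i ≠ 0)
    (hirr : Irreducible (minPolyOf b Bc))
    (K : Type) [Field K] [Algebra k K] [CharZero K] [IsAlgClosed K] :
    ∃ (φ : Polynomial S →ₐ[k] PowerSeries K), IsHypArc k d S b Bc φ ∧
      reesOrder (tId K) (hypContact k d S D b Bc φ) / (hypArcOrd k d S φ : ℝ≥0∞) =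
        reesOrder (mS k d S) (hypElim k d S D b Bc) := by
  classical
  -- the minimal slope
  obtain ⟨i, hib, ⟨hi2, hi0⟩, hmin⟩ := exists_min_ratio b (fun i => adicOrder (mS k d S) (Bc i))
    (fun i => i ≤ b - 2 ∧ Bc i ≠ 0) (by
      obtain ⟨i, h1, h2⟩ := hnz
      exact ⟨i, by omega, h1, h2⟩)
  have hkr := mS_krull (k := k) (d := d) S
  set N := adicOrder (mS k d S) (Bc i) with hN
  set c := b - i with hc
  have hc0 : 0 < c := by omega
  have hcN : c ≤ N := (mem_iff_le_adicOrder _ _ (hkr _ hi0) _).1 (hmem i hi2)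
  have hBiN : Bc i ∉ mS k d S ^ (N + 1) := by
    rw [mem_iff_le_adicOrder _ _ (hkr _ hi0)]; omega
  have hBj : ∀ j ≤ b - 2, Bc j ∈ mS k d S ^ ((N * (b - j)) ⌈/⌉ c) := by
    intro j hj
    by_cases hj0 : Bc j = 0
    · rw [hj0]; exact Ideal.zero_mem _
    rw [mem_iff_le_adicOrder _ _ (hkr _ hj0), ceilDiv_le_iff_le_mul hc0, mul_comm c]
    exact hmin j (by omega) ⟨hj, hj0⟩
  -- elimination algebra
  have hgen : (C (Bc i) * X ^ c : Polynomial S) ∈ hypElim k d S D b Bc := by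
    rw [hypElim, diffClosure, Algebra.mem_sInf]
    rintro G ⟨hG, -, -⟩
    exact hG ⟨i, hi2, rfl⟩
  have hle : hypElim k d S D b Bc ≤ wAlg (mS k d S) N c hc0 := by
    apply sInf_le
    refine ⟨?_, wAlg_graded _ _ _ _, wAlg_diffClosed D _ _ _ _ hcN⟩
    rintro _ ⟨j, hj, rfl⟩
    exact (mem_wAlg _ _ _ _ _ _).2 (hBj j hj)
  have helim : reesOrder (mS k d S) (hypElim k d S D b Bc) = (N : ℝ≥0∞) / (c : ℝ≥0∞) :=
    reesOrder_eq _ _ hkr N c hc0 (fun f l h => (mem_wAlg _ _ _ _ _ _).1 (hle h)) (Bc i) hi0 hgen hBiN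
  -- the constant term is nonzero
  have hB0 : Bc 0 ≠ 0 := by
    intro h0
    obtain ⟨e, rfl⟩ : ∃ e, b = e + 2 := ⟨b - 2, by omega⟩
    have hfac : minPolyOf (e + 2) Bc =
        X * (X ^ (e + 1) + ∑ j ∈ Finset.range e, C (Bc (j + 1)) * X ^ j) := by
      rw [minPolyOf, show e + 2 - 1 = e + 1 from rfl, Finset.sum_range_succ', h0, mul_add,
        Finset.mul_sum]
      simp only [C_0, zero_mul, add_zero]
      congr 1
      · ring
      · exact Finset.sum_congr rfl fun j _ => by ring
    rcases hirr.isUnit_or_isUnit hfac with h | h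
    · exact Polynomial.not_isUnit_X h
    · have hm : (X ^ (e + 1) + ∑ j ∈ Finset.range e, C (Bc (j + 1)) * X ^ j).natDegree = e + 1 := by
        rw [Polynomial.natDegree_add_eq_left_of_degree_lt, Polynomial.natDegree_X_pow]
        rw [Polynomial.degree_X_pow]
        refine lt_of_le_of_lt (Polynomial.degree_sum_le _ _) ?_
        rw [Finset.sup_lt_iff (WithBot.bot_lt_coe _)]
        intro j hj
        refine lt_of_le_of_lt (Polynomial.degree_C_mul_X_pow_le _ _) ?_
        have := Finset.mem_range.1 hj
        exact_mod_cast (by omega : j < e + 1)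
      have := Polynomial.natDegree_eq_zero_of_isUnit h
      omega
  -- generic direction
  obtain ⟨F, hF0, hF⟩ := exists_generic K S (Bc i) N hBiN
  obtain ⟨N0, hN0⟩ := hkr _ hB0
  obtain ⟨F', hF'0, hF'⟩ := exists_generic K S (Bc 0) N0
    (fun h => hN0 (Ideal.pow_le_pow_right (by omega) h))
  obtain ⟨v, hv⟩ : ∃ v : Fin d → k,
      MvPolynomial.eval v (F * F' * ∏ j, MvPolynomial.X j) ≠ 0 := by
    by_contra! hcon
    have h1 : F * F' * ∏ j, MvPolynomial.X j = 0 :=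
      MvPolynomial.funext fun v => by rw [hcon v, map_zero]
    refine mul_ne_zero (mul_ne_zero hF0 hF'0) (Finset.prod_ne_zero_iff.2 fun j _ => ?_) h1
    exact MvPolynomial.X_ne_zero j
  rw [map_mul, map_mul, map_prod] at hv
  have hv1 : MvPolynomial.eval v F ≠ 0 := fun h => hv (by rw [h]; ring)
  have hv2 : MvPolynomial.eval v F' ≠ 0 := fun h => hv (by rw [h]; ring)
  have hv3 : ∀ j, v j ≠ 0 := by
    intro j h
    apply hv
    rw [Finset.prod_eq_zero (Finset.mem_univ j) (by simpa using h), mul_zero]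
  set ψ := lineS K S v with hψ
  -- root
  have hfm : (minPolyOf b Bc).Monic ∧ (minPolyOf b Bc).natDegree = b := by
    have hlt : (∑ j ∈ Finset.range (b - 1), C (Bc j) * X ^ j).degree < (b : WithBot ℕ) := by
      refine lt_of_le_of_lt (Polynomial.degree_sum_le _ _) ?_
      rw [Finset.sup_lt_iff (WithBot.bot_lt_coe _)]
      intro j hj
      refine lt_of_le_of_lt (Polynomial.degree_C_mul_X_pow_le _ _) ?_
      have := Finset.mem_range.1 hj
      exact_mod_cast (by omega : j < b)
    constructor
    · exact Polynomial.monic_X_pow_add hlt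
    · rw [minPolyOf, Polynomial.natDegree_add_eq_left_of_degree_lt, Polynomial.natDegree_X_pow]
      rwa [Polynomial.degree_X_pow]
  obtain ⟨n, hn, r, hr⟩ := puiseux b ((minPolyOf b Bc).map (ψ : S →+* PowerSeries K))
    (hfm.1.map _) (by rw [hfm.1.natDegree_map, hfm.2]) (by omega)
  rw [Polynomial.eval₂_map] at hr
  set θ : S →ₐ[k] PowerSeries K :=
    ((PowerSeries.expand n hn : PowerSeries K →ₐ[K] PowerSeries K).restrictScalars k).comp ψ with hθ
  have hθap : ∀ s, θ s = PowerSeries.expand n hn (ψ s) := fun s => rfl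
  let φ : Polynomial S →ₐ[k] PowerSeries K :=
    { Polynomial.eval₂RingHom (θ : S →+* PowerSeries K) r with
      commutes' := fun a => by
        simp [Polynomial.algebraMap_apply] }
  have hφ : ∀ p, φ p = p.eval₂ (θ : S →+* PowerSeries K) r := fun p => rfl
  have hφC : ∀ s, φ (C s) = θ s := fun s => by rw [hφ, Polynomial.eval₂_C]; rfl
  have hφX : φ X = r := by rw [hφ, Polynomial.eval₂_X]
  have hφf : φ (minPolyOf b Bc) = 0 := hr
  have heq : r ^ b + ∑ j ∈ Finset.range (b - 1), θ (Bc j) * r ^ j = 0 := by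
    have h := hφf
    simp only [minPolyOf, map_add, map_pow, map_sum, map_mul, hφX, hφC] at h
    exact h
  have hθmem : ∀ s m, s ∈ mS k d S ^ m → PowerSeries.X ^ (n * m) ∣ θ s := fun s m hs =>
    expand_dvd n hn m _ (lineS_mem K S v m s hs)
  have hθBi : ¬ PowerSeries.X ^ (n * N + 1) ∣ θ (Bc i) := expand_not_dvd n hn _ _ (hF v hv1)
  have hθB0 : θ (Bc 0) ≠ 0 := by
    intro h
    refine expand_not_dvd n hn _ _ (hF' v hv2) ?_
    rw [← hψ, ← hθap, h]; exact dvd_zero _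
  have hθBi0 : θ (Bc i) ≠ 0 := fun h => hθBi (by rw [h]; exact dvd_zero _)
  have hr0 : r ≠ 0 := by
    intro h0
    obtain ⟨e, rfl⟩ : ∃ e, b = e + 2 := ⟨b - 2, by omega⟩
    apply hθB0
    rw [h0, show e + 2 - 1 = e + 1 from rfl, Finset.sum_range_succ'] at heq
    simpa using heq
  have hord : n * N ≤ tOrd r * c := by
    refine root_order b (n * N) c hb (fun j => θ (Bc j)) (fun j => n * ((N * (b - j)) ⌈/⌉ c))
      (fun j _ => ?_) (fun j hj => hθmem _ _ (hBj j hj)) r hr0 heq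
    have : N * (b - j) ≤ c * ((N * (b - j)) ⌈/⌉ c) := (ceilDiv_le_iff_le_mul hc0).1 le_rfl
    calc n * N * (b - j) = n * (N * (b - j)) := by ring
      _ ≤ n * (c * ((N * (b - j)) ⌈/⌉ c)) := Nat.mul_le_mul_left _ this
      _ = _ := by ring
  have hnr : n ≤ tOrd r := by
    have : n * c ≤ tOrd r * c := le_trans (Nat.mul_le_mul_left _ hcN) hord
    exact Nat.le_of_mul_le_mul_right this hc0
  -- the coordinates
  have hz : ∀ j, φ (C (zvar k d S j)) = PowerSeries.C (algebraMap k K (v j)) * PowerSeries.X ^ n := by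
    intro j
    rw [hφC, hθap, zvar, hψ, lineS_algebraMap, lineEv, MvPolynomial.aeval_X, map_mul,
      PowerSeries.expand_C, PowerSeries.expand_X]
  have hvK : ∀ j, algebraMap k K (v j) ≠ 0 := fun j => by
    rw [Ne, map_eq_zero]; exact hv3 j
  have hz0 : ∀ j, φ (C (zvar k d S j)) ≠ 0 := by
    intro j
    rw [hz]
    refine mul_ne_zero ?_ (pow_ne_zero _ PowerSeries.X_ne_zero)
    rw [Ne, map_eq_zero_iff _ PowerSeries.C_injective]
    exact hvK j
  have hzo : ∀ j, tOrd (φ (C (zvar k d S j))) = n := by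
    intro j
    apply le_antisymm
    · by_contra! hlt
      have := (le_tOrd _ (hz0 j) (n + 1)).1 hlt
      rw [hz, PowerSeries.X_pow_dvd_iff] at this
      have := this n (by omega)
      rw [PowerSeries.coeff_C_mul, PowerSeries.coeff_X_pow_self, mul_one] at this
      exact hvK j this
    · rw [le_tOrd _ (hz0 j), hz]
      exact dvd_mul_left _ _
  have hto : ∀ g : PowerSeries K, g ≠ 0 → n ≤ tOrd g → g ∈ tId K := by
    intro g hg hle'
    have := (le_tOrd g hg 1).1 (by omega)
    rw [← tId_pow_mem, pow_one] at this
    exact this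
  have harc : hypArcOrd k d S φ = n := by
    rw [hypArcOrd, hφX]
    apply le_antisymm
    · exact Nat.sInf_le (Or.inr ⟨⟨0, hd⟩, hzo _⟩)
    · apply le_csInf (Set.insert_nonempty _ _)
      rintro _ (rfl | ⟨j, rfl⟩)
      · exact hnr
      · exact (hzo j).ge
  -- the contact algebra
  have hcle : hypContact k d S D b Bc φ ≤ wAlg (tId K) (n * N) c hc0 := by
    rw [hypContact]
    apply Algebra.adjoin_le
    rintro _ (rfl | ⟨g, l, hg, -, rfl⟩)
    · have : (X : Polynomial (PowerSeries K)) = X ^ 1 := (pow_one _).symm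
      rw [this]
      apply (mem_wAlg _ _ _ _ _ _).2
      rw [tId_pow_mem, hφX]
      apply pow_dvd_pow
      rw [ceilDiv_le_iff_le_mul hc0, mul_one, mul_comm c]
      exact hord
    · apply (mem_wAlg _ _ _ _ _ _).2
      have h1 := (mem_wAlg _ _ _ _ _ _).1 (hle hg)
      rw [tId_pow_mem, hφC]
      refine dvd_trans (pow_dvd_pow _ ?_) (hθmem _ _ h1)
      rw [ceilDiv_le_iff_le_mul hc0]
      have : N * l ≤ c * ((N * l) ⌈/⌉ c) := (ceilDiv_le_iff_le_mul hc0).1 le_rfl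
      calc n * N * l = n * (N * l) := by ring
        _ ≤ n * (c * ((N * l) ⌈/⌉ c)) := Nat.mul_le_mul_left _ this
        _ = _ := by ring
  have hcontact : reesOrder (tId K) (hypContact k d S D b Bc φ) =
      ((n * N : ℕ) : ℝ≥0∞) / (c : ℝ≥0∞) := by
    refine reesOrder_eq _ _ tId_krull (n * N) c hc0
      (fun f l h => (mem_wAlg _ _ _ _ _ _).1 (hcle h)) (θ (Bc i)) hθBi0 ?_ ?_
    · apply Algebra.subset_adjoin
      refine Or.inr ⟨Bc i, c, hgen, ?_, ?_⟩
      · rw [hφC]; exact hθBi0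
      · rw [hφC]
    · rw [tId_pow_mem]; exact hθBi
  refine ⟨φ, ⟨hφf, ?_, fun j => hto _ (hz0 j) (hzo j).ge, ?_, hz0⟩, ?_⟩
  · rw [hφX]; exact hto _ hr0 hnr
  · rw [hφX]; exact hr0
  · rw [hcontact, harc, helim, Nat.cast_mul, mul_div_assoc, mul_comm]
    exact ENNReal.mul_div_cancel_right (by exact_mod_cast hn) (by simp)

/-- (Theorem `thm:igualdad`, hypersurface case.)  In the hypersurface setting there exist a
field extension `K ⊇ k` and an arc `φ : S[x] → K⟦t⟧` in `X = V(f)` through the closed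
point `ξ` such that `r_{X,φ} / ord(φ) = ord(G_X^{(d)})`. -/
theorem hypersurface_exists_arc_normalized_contact_order_eq_elimination_order
    (k : Type) [Field k] [CharZero k] (d : ℕ) (hd : 1 ≤ d)
    (S : Type) [CommRing S] [IsDomain S] [Algebra (MvPolynomial (Fin d) k) S]
    [Algebra k S] [IsScalarTower k (MvPolynomial (Fin d) k) S] [IsSLoc k d S]
    (D : Fin d → Derivation k S S)
    (hD : ∀ i j : Fin d, D j (zvar k d S i) = if i = j then 1 else 0)
    (b : ℕ) (hb : 2 ≤ b) (Bc : ℕ → S)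
    (hmem : ∀ i ≤ b - 2, Bc i ∈ (mS k d S) ^ (b - i))
    (hnz : ∃ i ≤ b - 2, Bc i ≠ 0)
    (hirr : Irreducible (minPolyOf b Bc)) :
    ∃ (K : Type) (_ : Field K) (_ : Algebra k K)
      (φ : Polynomial S →ₐ[k] PowerSeries K), IsHypArc k d S b Bc φ ∧
      reesOrder (tId K) (hypContact k d S D b Bc φ) / (hypArcOrd k d S φ : ℝ≥0∞) =
        reesOrder (mS k d S) (hypElim k d S D b Bc) := by
  obtain ⟨φ, h⟩ := main_aux k d hd S D b hb Bc hmem hnz hirr (AlgebraicClosure k)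
  exact ⟨AlgebraicClosure k, inferInstance, inferInstance, φ, h⟩

end NashMult
end
end

section
/- Let X = Spec(B) be given by a local presentation attached to the multiplicity as in the context, with elimination algebra G_X^{(d)} and closed point ξ. Then: (i) for every arc φ in X through ξ, ρ_{X,φ} ≥ ⌊ord(G_X^{(d)})⌋ · ord(φ); (ii) the infimum over all arcs φ in X through ξ of ⌊ρ_{X,φ}/ord(φ)⌋ equals ⌊ord(G_X^{(d)})⌋; and (iii) there exists an arc φ_0 in X through ξ with ρ_{X,φ_0}/ord(φ_0) = ord(G_X^{(d)}). -/
open Polynomial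
open scoped ENNReal

noncomputable section

namespace NashMult

variable (k : Type) [Field k] (d : ℕ)
variable (S : Type) [CommRing S] [Algebra (MvPolynomial (Fin d) k) S] [Algebra k S]

/-- A local presentation, attached to the multiplicity, of a `d`-dimensional variety
`X = Spec B` at the closed point `ξ`:  `B = S[x_1,…,x_{n-d}]/I` with `I` prime,
`S → B` injective and finite, and the minimal polynomial over `Frac S` of the class `θ_i`
of `x_i` is `f_i = x_i^{b_i} + B_{i,b_i-2} x_i^{b_i-2} + ⋯ + B_{i,0}` with `b_i ≥ 2`,
`B_{i,j} ∈ m^{b_i - j}`, and some `B_{i,j} ≠ 0`. -/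
structure Presentation [IsDomain S] : Type 1 where
  /-- the number `n - d ≥ 1` of extra variables `x_i` -/
  e : ℕ
  he : 1 ≤ e
  /-- the prime ideal `I ⊆ S[x_1,…,x_{n-d}]` defining `X` -/
  I : Ideal (MvPolynomial (Fin e) S)
  hprime : I.IsPrime
  hinj : Function.Injective (algebraMap S (MvPolynomial (Fin e) S ⧸ I))
  hfinite : Module.Finite S (MvPolynomial (Fin e) S ⧸ I)
  /-- the degrees `b_i ≥ 2` -/
  b : Fin e → ℕ
  hb : ∀ i, 2 ≤ b i
  /-- the coefficients `B_{i,j}` (only `j ≤ b_i - 2` is relevant) -/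
  Bc : Fin e → ℕ → S
  /-- `f_i(θ_i) = 0` -/
  hroot : ∀ i, Polynomial.aeval (Ideal.Quotient.mk I (MvPolynomial.X i))
    (minPolyOf (b i) (Bc i)) = 0
  /-- `f_i` is irreducible over `Frac S`, i.e. it is the minimal polynomial of `θ_i` -/
  hirr : ∀ i, Irreducible ((minPolyOf (b i) (Bc i)).map (algebraMap S (FractionRing S)))
  /-- `B_{i,j} ∈ m^{b_i - j}` -/
  hmem : ∀ i, ∀ j ≤ b i - 2, Bc i j ∈ (mS k d S) ^ (b i - j)
  /-- some `B_{i,j} ≠ 0` -/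
  hnz : ∃ i, ∃ j ≤ b i - 2, Bc i j ≠ 0

variable [IsDomain S]
variable {k d S}

/-- The coordinate ring `B = S[x_1,…,x_{n-d}]/I` of `X`. -/
abbrev BRing (P : Presentation k d S) : Type :=
  MvPolynomial (Fin P.e) S ⧸ P.I

/-- The class `θ_i` of `x_i` in `B`. -/
def theta (P : Presentation k d S) (i : Fin P.e) : BRing P :=
  Ideal.Quotient.mk P.I (MvPolynomial.X i)

/-- The elimination algebra in dimension `d`:
`G_X^{(d)} = Diff( S[ B_{i,j} W^{b_i - j} : i, j ] )`, a Rees algebra over `S`. -/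
def elimAlg (P : Presentation k d S) (D : Fin d → Derivation k S S) :
    Subalgebra S (Polynomial S) :=
  diffClosure D {p : Polynomial S | ∃ i, ∃ j ≤ P.b i - 2,
    p = Polynomial.C (P.Bc i j) * Polynomial.X ^ (P.b i - j)}

/-- An arc in `X` through `ξ` (with the required nonvanishing): a `k`-algebra homomorphism
`φ : B → K⟦t⟧` sending the maximal ideal of `B` at `ξ` into `(t)`, with all `φ(θ_i)` and
`φ(z_j)` nonzero. -/
def IsArc (P : Presentation k d S) {K : Type} [Field K] [Algebra k K]
    (φ : BRing P →ₐ[k] PowerSeries K) : Prop :=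
  (∀ s ∈ mS k d S, φ (algebraMap S (BRing P) s) ∈ tId K) ∧
  (∀ i, φ (theta P i) ∈ tId K) ∧
  (∀ i, φ (theta P i) ≠ 0) ∧
  (∀ j, φ (algebraMap S (BRing P) (zvar k d S j)) ≠ 0)

/-- The order of an arc: the minimum of the `t`-adic orders of the `φ(θ_i)` and the
`φ(z_j)`. -/
def arcOrd (P : Presentation k d S) {K : Type} [Field K] [Algebra k K]
    (φ : BRing P →ₐ[k] PowerSeries K) : ℕ :=
  sInf ((Set.range fun i => tOrd (φ (theta P i))) ∪
    (Set.range fun j => tOrd (φ (algebraMap S (BRing P) (zvar k d S j)))))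

/-- The contact algebra `G^{(1)}_{X_0,φ}`: the Rees algebra over `K⟦t⟧` generated by the
`φ(θ_i) W` together with all `φ(g) W^l` for `g W^l` a homogeneous element of `G_X^{(d)}`
with `φ(g) ≠ 0`. -/
def contactAlg (P : Presentation k d S) (D : Fin d → Derivation k S S)
    {K : Type} [Field K] [Algebra k K] (φ : BRing P →ₐ[k] PowerSeries K) :
    Subalgebra (PowerSeries K) (Polynomial (PowerSeries K)) :=
  Algebra.adjoin (PowerSeries K)
    ((Set.range fun i => (Polynomial.C (φ (theta P i)) * Polynomial.X :
        Polynomial (PowerSeries K))) ∪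
      {p : Polynomial (PowerSeries K) | ∃ (g : S) (l : ℕ),
        (Polynomial.C g * Polynomial.X ^ l : Polynomial S) ∈ elimAlg P D ∧
        φ (algebraMap S (BRing P) g) ≠ 0 ∧
        p = Polynomial.C (φ (algebraMap S (BRing P) g)) * Polynomial.X ^ l})

/-- The order of contact `r_{X,φ}` of the arc `φ` with `Max mult(X)`: the order of the
contact algebra at the closed point of `K⟦t⟧`. -/
def rOrd (P : Presentation k d S) (D : Fin d → Derivation k S S)
    {K : Type} [Field K] [Algebra k K] (φ : BRing P →ₐ[k] PowerSeries K) : ℝ≥0∞ :=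
  reesOrder (tId K) (contactAlg P D φ)

/-- The persistance `ρ_{X,φ}`: the least number of transforms of the contact algebra
(i.e. of point blow-ups directed by `φ`) needed to make the closed point leave the
singular locus, that is, to lower the Nash multiplicity. -/
def rho (P : Presentation k d S) (D : Fin d → Derivation k S S)
    {K : Type} [Field K] [Algebra k K] (φ : BRing P →ₐ[k] PowerSeries K) : ℕ :=
  persist (tId K) (PowerSeries.X : PowerSeries K) (contactAlg P D φ)



theorem formallySmooth_charZero (k K : Type) [Field k] [CharZero k] [Field K] [Algebra k K] :
    Algebra.FormallySmooth k K := by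
  obtain ⟨s, hs⟩ := exists_isTranscendenceBasis k K
  have h1 : Algebra.IsAlgebraic (IntermediateField.adjoin k (Set.range ((↑) : s → K))) K :=
    hs.isAlgebraic_field
  have : CharZero (IntermediateField.adjoin k (Set.range ((↑) : s → K))) :=
    charZero_of_injective_algebraMap (algebraMap k _).injective
  exact Algebra.FormallySmooth.of_algebraicIndependent_of_isSeparable hs.1

section
variable {k K V : Type} [Field k] [Field K] [Algebra k K] [CommRing V]
  [Algebra k V] {m : Ideal V}

theorem exists_X_pow_mul_unit {F : PowerSeries K} (hF : F ≠ 0) :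
    ∃ (o : ℕ) (u : (PowerSeries K)ˣ), F = PowerSeries.X ^ o * (u : PowerSeries K) := by
  refine ⟨F.order.toNat, PowerSeries.Unit_of_divided_by_X_pow_order F, ?_⟩
  rw [PowerSeries.Unit_of_divided_by_X_pow_order_nonzero hF]
  exact PowerSeries.X_pow_order_mul_divXPowOrder.symm

theorem powerSeries_hom_ext {R : Type} [CommRing R] (A B : PowerSeries K →+* R) (i : ℕ)
    (hC : ∀ c, A (PowerSeries.C c) = B (PowerSeries.C c))
    (hX : A PowerSeries.X = B PowerSeries.X) (hB : B (PowerSeries.X ^ i) = 0) (F : PowerSeries K) :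
    A F = B F := by
  have h1 : ∀ q : Polynomial K, A (q : PowerSeries K) = B (q : PowerSeries K) := by
    intro q
    induction q using Polynomial.induction_on' with
    | add p q hp hq => simp [hp, hq]
    | monomial n a =>
      rw [← Polynomial.C_mul_X_pow_eq_monomial]
      simp [hC, hX]
  have hA : A (PowerSeries.X ^ i) = 0 := by rw [map_pow, hX, ← map_pow, hB]
  have h2 : PowerSeries.X ^ i ∣ F - (PowerSeries.trunc i F : PowerSeries K) := by
    rw [PowerSeries.X_pow_dvd_iff]
    intro j hj
    simp [PowerSeries.coeff_trunc, hj]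
  obtain ⟨r, hr⟩ := h2
  have hF : F = (PowerSeries.trunc i F : PowerSeries K) + PowerSeries.X ^ i * r := by
    rw [← hr]; ring
  rw [hF, map_add, map_add, map_mul, map_mul, hA, hB, h1]
  simp

theorem factorPow_evalA {V : Type} [CommRing V] (m : Ideal V) {i n : ℕ} (h : i ≤ n)
    (x : AdicCompletion m V) :
    Ideal.Quotient.factorPow m h (AdicCompletion.evalₐ m n x) = AdicCompletion.evalₐ m i x := by
  induction x using AdicCompletion.induction_on with
  | h x =>
    rw [AdicCompletion.evalₐ_mk, AdicCompletion.evalₐ_mk]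
    have := x.2 h
    rw [SModEq.sub_mem] at this
    have h2 : Ideal.Quotient.mk (m ^ i) (x.1 n) = Ideal.Quotient.mk (m ^ i) (x.1 i) := by
      rw [eq_comm, Ideal.Quotient.eq]
      simpa using this
    exact h2

/-- a truncated evaluation map -/
theorem exists_truncEval (n : ℕ) (p : V) (hp : p ∈ m) (σ : K →+* V ⧸ m ^ n) :
    ∃ T : PowerSeries K →+* V ⧸ m ^ n, (∀ c, T (PowerSeries.C c) = σ c) ∧
      T PowerSeries.X = Ideal.Quotient.mk _ p := by
  set π : V ⧸ m ^ n := Ideal.Quotient.mk _ p with hπ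
  have hn : π ^ n = 0 := by
    rw [hπ, ← map_pow, Ideal.Quotient.eq_zero_iff_mem]
    exact Ideal.pow_mem_pow hp n
  have key : ∀ q : Polynomial K, eval₂ σ π (PowerSeries.trunc n (q : PowerSeries K)) = eval₂ σ π q := by
    intro q
    have : (X : Polynomial K) ^ n ∣ q - PowerSeries.trunc n (q : PowerSeries K) := by
      rw [Polynomial.X_pow_dvd_iff]
      intro d hd
      simp [PowerSeries.coeff_trunc, hd]
    obtain ⟨r, hr⟩ := this
    have h2 := congrArg (eval₂ σ π) hr
    simp [hn, sub_eq_zero] at h2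
    exact h2.symm
  let T : PowerSeries K →+* V ⧸ m ^ n :=
    { toFun := fun f => eval₂ σ π (PowerSeries.trunc n f)
      map_one' := by
        have := key 1
        simpa using this
      map_zero' := by simp
      map_add' := by intro x y; simp
      map_mul' := by
        intro x y
        rw [← PowerSeries.trunc_trunc_mul_trunc, ← Polynomial.coe_mul, key, eval₂_mul] }
  refine ⟨T, fun c => ?_, ?_⟩
  · have := key (Polynomial.C c)
    simpa using! this
  · have := key (Polynomial.X)
    simpa using! this

theorem cohen_aux [IsDomain V] (K : Type) [Field K] [Algebra k K] (p : V) (hp0 : p ≠ 0)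
    (hpm : m = Ideal.span {p}) (hpu : ¬ IsUnit p)
    (f : K →ₐ[k] V ⧸ m) (hf : Function.Surjective f) [Algebra.FormallySmooth k K] :
    ∃ τ : V →ₐ[k] PowerSeries K, ∀ x n, PowerSeries.X ^ n ∣ τ x ↔ x ∈ m ^ n := by
  obtain ⟨g, hg⟩ := Algebra.FormallySmooth.exists_adicCompletionEvalOneₐ_comp_eq f
  have hp : p ∈ m := by rw [hpm]; exact Ideal.mem_span_singleton_self p
  have hmem : ∀ n x, x ∈ m ^ n ↔ p ^ n ∣ x := by
    intro n x
    rw [hpm, Ideal.span_singleton_pow, Ideal.mem_span_singleton]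
  let σ : (n : ℕ) → K →+* V ⧸ m ^ n := fun n =>
    (AdicCompletion.evalₐ m n : _ →+* V ⧸ m ^ n).comp (g : K →+* AdicCompletion m V)
  have hσ : ∀ n i (h : i ≤ n) c, Ideal.Quotient.factorPow m h (σ n c) = σ i c := by
    intro n i h c
    exact factorPow_evalA m h (g c)
  have hσ1 : ∀ (c : K) (z : V), f c = Ideal.Quotient.mk m z → ∀ w : V, ∀ n, 1 ≤ n →
      σ n c = Ideal.Quotient.mk _ w → z - w ∈ m := by
    intro c z hz w n hn hw
    have h1 := hσ n 1 hn c
    rw [hw] at h1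
    have h2 := congrArg (fun F => F c) hg
    have h3 : AdicCompletion.evalOneₐ m (g c) = Ideal.Quotient.mk m z := by
      rw [← hz]; exact h2
    have h4 : (Ideal.Quotient.factor (show m ^ 1 ≤ m by simp)) (σ 1 c) = AdicCompletion.evalOneₐ m (g c) := by
      simp [σ]
    rw [← h1, h3] at h4
    have : Ideal.Quotient.mk m w = Ideal.Quotient.mk m z := h4
    rw [Ideal.Quotient.eq] at this
    have := neg_mem this
    simpa using this
  choose T hTC hTX using fun n => exists_truncEval n p hp (σ n)
  have hTker : ∀ n F, T n F = 0 ↔ PowerSeries.X ^ n ∣ F := by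
    intro n F
    constructor
    · intro h
      by_cases hF : F = 0
      · simp [hF]
      obtain ⟨o, u, hu⟩ := exists_X_pow_mul_unit hF
      by_cases ho : n ≤ o
      · rw [hu]; exact Dvd.dvd.mul_right (pow_dvd_pow _ ho) _
      exfalso
      rw [hu, map_mul, map_pow, hTX, ((u.isUnit).map (T n)).mul_left_eq_zero, ← map_pow,
        Ideal.Quotient.eq_zero_iff_mem, hmem] at h
      exact ho ((pow_dvd_pow_iff hp0 hpu).1 h)
    · rintro ⟨r, rfl⟩
      rw [map_mul, map_pow, hTX, ← map_pow, (Ideal.Quotient.eq_zero_iff_mem).2 (Ideal.pow_mem_pow hp n), zero_mul]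
  have hTfac : ∀ n i (h : i ≤ n) F, Ideal.Quotient.factorPow m h (T n F) = T i F := by
    intro n i h F
    refine powerSeries_hom_ext ((Ideal.Quotient.factorPow m h).comp (T n)) (T i) i ?_ ?_ ?_ F
    · intro c; simp only [RingHom.comp_apply, hTC, hσ]
    · simp only [RingHom.comp_apply, hTX]; rfl
    · exact (hTker i _).2 dvd_rfl
  have hTsurj : ∀ n (y : V), ∃ F, T n F = Ideal.Quotient.mk _ y := by
    intro n y
    induction n with
    | zero =>
      refine ⟨0, ?_⟩
      apply eq_of_zero_eq_one
      rw [← map_one (Ideal.Quotient.mk _), eq_comm, Ideal.Quotient.eq_zero_iff_mem]; simp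
    | succ n ih =>
      obtain ⟨F, hF⟩ := ih
      obtain ⟨w, hw⟩ := Ideal.Quotient.mk_surjective (T (n+1) F)
      have h1 := hTfac (n+1) n (Nat.le_succ n) F
      rw [← hw, hF] at h1
      have h2 : w - y ∈ m ^ n := by rw [← Ideal.Quotient.eq]; exact h1
      rw [hmem] at h2
      obtain ⟨z, hz⟩ := h2
      obtain ⟨c, hc⟩ := hf (Ideal.Quotient.mk m z)
      obtain ⟨w', hw'⟩ := Ideal.Quotient.mk_surjective (σ (n+1) c)
      have h3 := hσ1 c z hc w' (n+1) (by omega) hw'.symm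
      refine ⟨F - PowerSeries.X ^ n * PowerSeries.C c, ?_⟩
      rw [map_sub, map_mul, map_pow, hTX, hTC, ← hw, ← hw', ← map_pow, ← map_mul, ← map_sub,
        Ideal.Quotient.eq]
      have : w - p ^ n * w' - y = p ^ n * (z - w') := by
        rw [mul_sub, ← hz]; ring
      rw [this, pow_succ]
      exact Ideal.mul_mem_mul (Ideal.pow_mem_pow hp n) h3
  have huniq : ∀ F G, (∀ n, T n F = T n G) → F = G := by
    intro F G h
    rw [← sub_eq_zero]
    ext i
    have := (hTker (i+1) (F - G)).1 (by rw [map_sub, h, sub_self])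
    rw [PowerSeries.X_pow_dvd_iff] at this
    rw [this i (Nat.lt_succ_self i)]; simp
  have hex : ∀ y : V, ∃ F, ∀ n, T n F = Ideal.Quotient.mk _ y := by
    intro y
    choose Fs hFs using fun n => hTsurj n y
    refine ⟨PowerSeries.mk fun i => PowerSeries.coeff i (Fs (i+1)), fun n => ?_⟩
    rw [← hFs n, ← sub_eq_zero, ← map_sub, hTker, PowerSeries.X_pow_dvd_iff]
    intro i hi
    have h1 : T (i+1) (Fs (i+1) - Fs n) = 0 := by
      rw [map_sub, sub_eq_zero, hFs, ← hTfac n (i+1) hi, hFs]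
      rfl
    rw [hTker, PowerSeries.X_pow_dvd_iff] at h1
    simpa using h1 i (Nat.lt_succ_self i)
  choose τ hτ using hex
  let τ' : V →ₐ[k] PowerSeries K :=
    { toFun := τ
      map_one' := huniq _ _ fun n => by rw [hτ, map_one, map_one]
      map_zero' := huniq _ _ fun n => by rw [hτ, map_zero, map_zero]
      map_add' := fun x y => huniq _ _ fun n => by rw [hτ, map_add, map_add, hτ, hτ]
      map_mul' := fun x y => huniq _ _ fun n => by rw [hτ, map_mul, map_mul, hτ, hτ]
      commutes' := fun a => huniq _ _ fun n => by
        rw [hτ]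
        have : algebraMap k (PowerSeries K) a = PowerSeries.C (algebraMap k K a) :=
          PowerSeries.algebraMap_apply
        rw [this, hTC]
        have h2 : σ n (algebraMap k K a) = AdicCompletion.evalₐ m n (g (algebraMap k K a)) := rfl
        rw [h2, g.commutes, IsScalarTower.algebraMap_apply k V (AdicCompletion m V), AlgHom.commutes]
        rfl }
  refine ⟨τ', fun x n => ?_⟩
  rw [← hTker, ← Ideal.Quotient.eq_zero_iff_mem, ← hτ x n]
  rfl

theorem cohen_dvr (k V : Type) [Field k] [CharZero k] [CommRing V] [IsDomain V]
    [IsDiscreteValuationRing V] [Algebra k V] :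
    ∃ (K : Type) (_ : Field K) (_ : Algebra k K) (τ : V →ₐ[k] PowerSeries K),
      ∀ x n, PowerSeries.X ^ n ∣ τ x ↔ x ∈ (IsLocalRing.maximalIdeal V) ^ n := by
  obtain ⟨p, hp⟩ := IsDiscreteValuationRing.exists_irreducible V
  have hm : IsLocalRing.maximalIdeal V = Ideal.span {p} := hp.maximalIdeal_eq
  refine ⟨IsLocalRing.ResidueField V, inferInstance, inferInstance, ?_⟩
  have := formallySmooth_charZero k (IsLocalRing.ResidueField V)
  let f : IsLocalRing.ResidueField V →ₐ[k] V ⧸ IsLocalRing.maximalIdeal V := AlgHom.id k _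
  exact cohen_aux (IsLocalRing.ResidueField V) p hp.ne_zero hm hp.not_isUnit f
    (fun x => ⟨x, rfl⟩)
end

theorem exists_dedekind_extension (S B A : Type) [CommRing S] [IsDomain S]
    [CommRing B] [IsDomain B] [Algebra S B]
    [Module.Finite S B] (hinj : Function.Injective (algebraMap S B))
    [CommRing A] [IsDedekindDomain A] [CharZero A] (ψ : S →+* A)
    (hψ : Function.Injective ψ) :
    ∃ (O : Type) (_ : CommRing O) (_ : IsDedekindDomain O) (_ : Algebra A O)
      (φ₂ : B →+* O), Algebra.IsIntegral A O ∧ Function.Injective (algebraMap A O) ∧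
      ∀ g : S, φ₂ (algebraMap S B g) = algebraMap A O (ψ g) := by
  let Λ := FractionRing A
  have hcharL : CharZero Λ := charZero_of_injective_algebraMap (IsFractionRing.injective A Λ)
  let Ω := AlgebraicClosure Λ
  let algSA : Algebra S A := ψ.toAlgebra
  have hSA : ∀ g : S, algebraMap S A g = ψ g := fun _ => rfl
  have : IsScalarTower S A Ω := inferInstance
  have : FaithfulSMul A Ω := (faithfulSMul_iff_algebraMap_injective A Ω).2 (by
    rw [IsScalarTower.algebraMap_eq A Λ Ω]
    exact (algebraMap Λ Ω).injective.comp (IsFractionRing.injective A Λ))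
  have : FaithfulSMul S Ω := (faithfulSMul_iff_algebraMap_injective S Ω).2 (by
    rw [IsScalarTower.algebraMap_eq S A Ω]
    exact (FaithfulSMul.algebraMap_injective A Ω).comp hψ)
  have : FaithfulSMul S B := (faithfulSMul_iff_algebraMap_injective S B).2 hinj
  have : Algebra.IsIntegral S B := inferInstance
  let φ₁ : B →ₐ[S] Ω := IsAlgClosed.lift
  obtain ⟨s, hs⟩ := Module.Finite.fg_top (R := S) (M := B)
  let L : IntermediateField Λ Ω := IntermediateField.adjoin Λ (φ₁ '' (s : Set B))
  have hInt : ∀ b : B, IsIntegral A (φ₁ b) := by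
    intro b
    have h1 : IsIntegral S (φ₁ b) := (Algebra.IsIntegral.isIntegral (R := S) b).map φ₁
    exact h1.tower_top
  have : FiniteDimensional Λ L := by
    apply IntermediateField.finiteDimensional_adjoin
    rintro x ⟨b, -, rfl⟩
    exact (hInt b).tower_top
  have hL : ∀ b : B, φ₁ b ∈ L := by
    intro b
    have hb : b ∈ Submodule.span S (s : Set B) := by rw [hs]; trivial
    induction hb using Submodule.span_induction with
    | mem x hx => exact IntermediateField.subset_adjoin _ _ ⟨x, hx, rfl⟩
    | zero => rw [map_zero]; exact zero_mem L
    | add x y _ _ hx hy => rw [map_add]; exact add_mem hx hy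
    | smul a x _ hx =>
      rw [map_smul, Algebra.smul_def]
      refine mul_mem ?_ hx
      rw [IsScalarTower.algebraMap_apply S A Ω, IsScalarTower.algebraMap_apply A Λ Ω]
      exact L.algebraMap_mem _
  let O := integralClosure A L
  have : IsDedekindDomain O := integralClosure.isDedekindDomain A Λ L
  have hφ₂ : ∀ b : B, (⟨φ₁ b, hL b⟩ : L) ∈ O := by
    intro b
    have h := hInt b
    have : IsIntegral A (algebraMap L Ω ⟨φ₁ b, hL b⟩) := h
    change IsIntegral A _
    have t : IsScalarTower A L Ω := IsScalarTower.of_algebraMap_eq fun _ => rfl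
    exact (isIntegral_algebraMap_iff (algebraMap L Ω).injective).1 this
  let φ₂ : B →+* O :=
    { toFun := fun b => ⟨⟨φ₁ b, hL b⟩, hφ₂ b⟩
      map_one' := by ext; simp
      map_zero' := by ext; simp
      map_add' := by intro x y; ext; simp
      map_mul' := by intro x y; ext; simp }
  have hφ₂S : ∀ g : S, φ₂ (algebraMap S B g) = algebraMap A O (ψ g) := by
    intro g
    ext
    change φ₁ (algebraMap S B g) = _
    rw [φ₁.commutes]
    rfl
  have hAO : Function.Injective (algebraMap A O) := by
    intro x y h
    have := congrArg (fun z : O => ((z : L) : Ω)) h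
    exact FaithfulSMul.algebraMap_injective A Ω this
  exact ⟨O, inferInstance, inferInstance, inferInstance, φ₂, inferInstance, hAO, hφ₂S⟩

theorem arc_extend (k : Type) [Field k] [CharZero k] (S B : Type) [CommRing S] [IsDomain S]
    [CommRing B] [IsDomain B] [Algebra k S] [Algebra k B] [Algebra S B] [IsScalarTower k S B]
    [Module.Finite S B] (hinj : Function.Injective (algebraMap S B))
    (K₀ : Type) [Field K₀] [Algebra k K₀] (ψ : S →ₐ[k] PowerSeries K₀)
    (hψ : Function.Injective ψ) :
    ∃ (K : Type) (_ : Field K) (_ : Algebra k K) (φ : B →ₐ[k] PowerSeries K) (e : ℕ), 1 ≤ e ∧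
      ∀ (g : S) (n : ℕ), (∃ u : (PowerSeries K₀)ˣ, ψ g = PowerSeries.X ^ n * (u : PowerSeries K₀)) →
        ∃ u : (PowerSeries K)ˣ, φ (algebraMap S B g) = PowerSeries.X ^ (e * n) * (u : PowerSeries K) := by
  have hchar : CharZero K₀ := charZero_of_injective_algebraMap (algebraMap k K₀).injective
  let A := PowerSeries K₀
  have hcharA : CharZero A := charZero_of_injective_algebraMap (algebraMap k A).injective
  obtain ⟨O, iO1, iO2, iO3, φ₂, iO4, hAO, hφ₂S⟩ :=
    exists_dedekind_extension S B A hinj (ψ : S →+* A) hψ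
  obtain ⟨𝔭, h𝔭⟩ := Ideal.exists_maximal O
  have : 𝔭.IsPrime := h𝔭.isPrime
  have ht : algebraMap A O (PowerSeries.X) ∈ 𝔭 := by
    have h1 : (𝔭.comap (algebraMap A O)).IsMaximal := Ideal.isMaximal_comap_of_isIntegral_of_isMaximal 𝔭
    have h2 := IsLocalRing.eq_maximalIdeal h1
    have h3 : (PowerSeries.X : A) ∈ 𝔭.comap (algebraMap A O) := by
      rw [h2, IsLocalRing.mem_maximalIdeal]
      exact PowerSeries.X_prime.not_isUnit
    exact h3
  have htne : algebraMap A O (PowerSeries.X) ≠ 0 := by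
    rw [Ne, map_eq_zero_iff _ hAO]; exact PowerSeries.X_ne_zero
  have hp0 : 𝔭 ≠ ⊥ := by
    rintro rfl
    exact htne (by simpa using ht)
  let V := Localization.AtPrime 𝔭
  have : IsDiscreteValuationRing V :=
    IsLocalization.AtPrime.isDiscreteValuationRing_of_dedekind_domain O hp0 V
  let α : k →+* V := (algebraMap O V).comp (φ₂.comp (algebraMap k B))
  let : Algebra k V := α.toAlgebra
  obtain ⟨K, iK, iA, τ, hτ⟩ := cohen_dvr k V
  let φ : B →ₐ[k] PowerSeries K :=
    { (τ : V →+* PowerSeries K).comp ((algebraMap O V).comp φ₂) with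
      commutes' := fun a => τ.commutes a }
  have hφ : ∀ b, φ b = τ (algebraMap O V (φ₂ b)) := fun _ => rfl
  have hOV : Function.Injective (algebraMap O V) :=
    IsLocalization.injective V (Ideal.primeCompl_le_nonZeroDivisors 𝔭)
  have hτ0 : ∀ x, τ x = 0 → x = 0 := by
    intro x hx
    have : ∀ n, x ∈ (IsLocalRing.maximalIdeal V) ^ n := fun n => by
      rw [← hτ, hx]; exact dvd_zero _
    have h2 : x ∈ (⨅ n : ℕ, (IsLocalRing.maximalIdeal V) ^ n) := by
      rw [Submodule.mem_iInf]; exact this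
    rw [Ideal.iInf_pow_eq_bot_of_isLocalRing _ (IsLocalRing.maximalIdeal.isMaximal V).ne_top] at h2
    simpa using h2
  let T : V := algebraMap O V (algebraMap A O PowerSeries.X)
  have hT0 : τ T ≠ 0 := by
    intro h
    have := hτ0 _ h
    rw [map_eq_zero_iff _ hOV] at this
    exact htne this
  obtain ⟨e, u, hu⟩ := exists_X_pow_mul_unit hT0
  have he : 1 ≤ e := by
    have hT : T ∈ (IsLocalRing.maximalIdeal V) ^ 1 := by
      rw [pow_one]
      exact (IsLocalization.AtPrime.to_map_mem_maximal_iff V 𝔭 _).2 ht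
    rw [← hτ, hu, pow_one] at hT
    by_contra h
    have : e = 0 := by omega
    subst this
    rw [pow_zero, one_mul] at hT
    exact PowerSeries.X_prime.not_isUnit (isUnit_of_dvd_unit hT u.isUnit)
  refine ⟨K, iK, iA, φ, e, he, ?_⟩
  rintro g n ⟨w, hw⟩
  let R : A →+* PowerSeries K := (τ : V →+* PowerSeries K).comp ((algebraMap O V).comp (algebraMap A O))
  refine ⟨u ^ n * Units.map (R : A →* PowerSeries K) w, ?_⟩
  rw [hφ, hφ₂S, RingHom.coe_coe, hw]
  have h1 : R (PowerSeries.X ^ n * (w : PowerSeries K₀)) = (R PowerSeries.X) ^ n * R (w : PowerSeries K₀) := by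
    rw [map_mul, map_pow]
  have h2 : R PowerSeries.X = τ T := rfl
  rw [h2, hu, mul_pow, ← pow_mul] at h1
  refine h1.trans ?_
  rw [mul_assoc]
  simp

section orders

theorem mem_tId_pow {K : Type} [Field K] (f : PowerSeries K) (n : ℕ) :
    f ∈ tId K ^ n ↔ PowerSeries.X ^ n ∣ f := by
  rw [tId, Ideal.span_singleton_pow, Ideal.mem_span_singleton]

theorem mem_pow_iff_le_adicOrder {R : Type} [CommRing R] (m : Ideal R) (f : R)
    (h : ∃ N, f ∉ m ^ N) (n : ℕ) : f ∈ m ^ n ↔ n ≤ adicOrder m f := by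
  obtain ⟨N, hN⟩ := h
  have hb : BddAbove {n : ℕ | f ∈ m ^ n} := by
    refine ⟨N, fun a ha => ?_⟩
    by_contra hlt
    exact hN (Ideal.pow_le_pow_right (by omega) ha)
  have hne : {n : ℕ | f ∈ m ^ n}.Nonempty := ⟨0, by simp⟩
  constructor
  · intro hn; exact le_csSup hb hn
  · intro hn
    exact Ideal.pow_le_pow_right hn (Nat.sSup_mem hne hb)

theorem X_pow_dvd_X_pow_mul_unit {K : Type} [Field K] (o n : ℕ) (u : (PowerSeries K)ˣ) :
    PowerSeries.X ^ n ∣ PowerSeries.X ^ o * (u : PowerSeries K) ↔ n ≤ o := by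
  rw [Units.dvd_mul_right]
  exact pow_dvd_pow_iff PowerSeries.X_ne_zero PowerSeries.X_prime.not_isUnit

theorem le_tOrd_iff {K : Type} [Field K] (f : PowerSeries K) (hf : f ≠ 0) (n : ℕ) :
    n ≤ tOrd f ↔ PowerSeries.X ^ n ∣ f := by
  rw [← mem_tId_pow]
  refine (mem_pow_iff_le_adicOrder _ _ ?_ n).symm
  obtain ⟨o, u, hu⟩ := exists_X_pow_mul_unit hf
  refine ⟨o + 1, ?_⟩
  rw [mem_tId_pow, hu, X_pow_dvd_X_pow_mul_unit]
  omega

theorem tOrd_eq {K : Type} [Field K] (o : ℕ) (u : (PowerSeries K)ˣ) :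
    tOrd (PowerSeries.X ^ o * (u : PowerSeries K)) = o := by
  apply le_antisymm
  · rw [← X_pow_dvd_X_pow_mul_unit o _ u, ← le_tOrd_iff]
    exact mul_ne_zero (pow_ne_zero _ PowerSeries.X_ne_zero) u.ne_zero
  · rw [le_tOrd_iff, X_pow_dvd_X_pow_mul_unit]
    exact mul_ne_zero (pow_ne_zero _ PowerSeries.X_ne_zero) u.ne_zero

/-- the subalgebra of polynomials whose `l`-th coefficient lies in `m ^ h l` -/
def filtAlg {R : Type} [CommRing R] (m : Ideal R) (h : ℕ → ℕ) (h0 : h 0 = 0)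
    (hadd : ∀ i j, h (i + j) ≤ h i + h j) : Subalgebra R (Polynomial R) where
  carrier := {p | ∀ l, p.coeff l ∈ m ^ h l}
  mul_mem' := by
    intro p q hp hq l
    rw [Polynomial.coeff_mul]
    refine Ideal.sum_mem _ fun x hx => ?_
    rw [← Finset.HasAntidiagonal.mem_antidiagonal.1 hx]
    refine Ideal.pow_le_pow_right (hadd _ _) ?_
    rw [pow_add]
    exact Ideal.mul_mem_mul (hp _) (hq _)
  add_mem' := by
    intro p q hp hq l
    rw [Polynomial.coeff_add]
    exact add_mem (hp l) (hq l)
  algebraMap_mem' := by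
    intro r l
    rw [Polynomial.algebraMap_apply, Polynomial.coeff_C]
    split_ifs with hl
    · subst hl; rw [h0]; simp
    · exact zero_mem _

theorem mem_filtAlg {R : Type} [CommRing R] (m : Ideal R) (h : ℕ → ℕ) (h0 : h 0 = 0)
    (hadd : ∀ i j, h (i + j) ≤ h i + h j) (p : Polynomial R) :
    p ∈ filtAlg m h h0 hadd ↔ ∀ l, p.coeff l ∈ m ^ h l := Iff.rfl

theorem monomial_mem_filtAlg {R : Type} [CommRing R] (m : Ideal R) (h : ℕ → ℕ) (h0 : h 0 = 0)
    (hadd : ∀ i j, h (i + j) ≤ h i + h j) (f : R) (l : ℕ) :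
    (C f * X ^ l : Polynomial R) ∈ filtAlg m h h0 hadd ↔ f ∈ m ^ h l := by
  rw [mem_filtAlg]
  constructor
  · intro H
    simpa using H l
  · intro H i
    rw [Polynomial.coeff_C_mul_X_pow]
    split_ifs with hi
    · rw [hi]; exact H
    · exact zero_mem _

theorem derivation_mem_pow {k R : Type} [CommRing k] [CommRing R] [Algebra k R]
    (D : Derivation k R R) (m : Ideal R) (n : ℕ) : ∀ f ∈ m ^ (n + 1), D f ∈ m ^ n := by
  induction n with
  | zero => intro f _; simp
  | succ n ih =>
    intro f hf
    rw [pow_succ] at hf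
    induction hf using Submodule.mul_induction_on' with
    | mem_mul_mem x hx y hy =>
      rw [Derivation.leibniz, smul_eq_mul, smul_eq_mul]
      refine add_mem (Ideal.mul_mem_right _ _ hx) ?_
      rw [mul_comm, pow_succ]
      exact Ideal.mul_mem_mul (ih x hx) hy
    | add x _ y _ hx hy => rw [map_add]; exact add_mem hx hy

/-- the ceiling of `a * l / c` -/
def ceilF (a c l : ℕ) : ℕ := (a * l + (c - 1)) / c

theorem ceilF_le_iff {a c : ℕ} (hc : 1 ≤ c) (l n : ℕ) : ceilF a c l ≤ n ↔ a * l ≤ c * n := by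
  rw [ceilF, ← Nat.lt_succ_iff, Nat.div_lt_iff_lt_mul (by omega), Nat.succ_mul, mul_comm n c]
  omega

theorem le_ceilF {a c : ℕ} (hc : 1 ≤ c) (l : ℕ) : a * l ≤ c * ceilF a c l :=
  (ceilF_le_iff hc l _).1 le_rfl

theorem ceilF_zero {a c : ℕ} (hc : 1 ≤ c) : ceilF a c 0 = 0 :=
  Nat.le_zero.1 ((ceilF_le_iff hc 0 0).2 (by simp))

theorem ceilF_add {a c : ℕ} (hc : 1 ≤ c) (i j : ℕ) :
    ceilF a c (i + j) ≤ ceilF a c i + ceilF a c j := by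
  rw [ceilF_le_iff hc, mul_add, mul_add]
  exact add_le_add (le_ceilF hc i) (le_ceilF hc j)

theorem ceilF_succ {a c : ℕ} (hc : 1 ≤ c) (hac : c ≤ a) (l : ℕ) :
    ceilF a c l + 1 ≤ ceilF a c (l + 1) := by
  have h1 := le_ceilF (a := a) hc (l + 1)
  have h3 : 1 ≤ ceilF a c (l+1) := by
    by_contra h
    have : ceilF a c (l+1) = 0 := by omega
    rw [this] at h1
    nlinarith
  obtain ⟨w, hw⟩ := Nat.exists_eq_add_of_le' h3
  rw [hw] at h1 ⊢
  have : ceilF a c l ≤ w := by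
    rw [ceilF_le_iff hc]
    nlinarith
  omega

end orders

section persistence
variable {K : Type} [Field K]

theorem mem_iterate_transform (T : PowerSeries K) (I : ℕ → Ideal (PowerSeries K)) (κ l : ℕ)
    (f : PowerSeries K) : f ∈ (transformFam T)^[κ] I l ↔ f * T ^ (κ * l) ∈ I l := by
  induction κ generalizing f with
  | zero => simp
  | succ n ih =>
    rw [Function.iterate_succ_apply']
    rw [transformFam, Ideal.mem_colon_span_singleton, ih]
    rw [mul_assoc, ← pow_add]
    ring_nf

theorem mem_idealFam {R : Type} [CommRing R] (G : Subalgebra R (Polynomial R)) (l : ℕ) (f : R) :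
    f ∈ idealFam G l ↔ (C f * X ^ l : Polynomial R) ∈ G := by
  rw [Polynomial.C_mul_X_pow_eq_monomial]
  rfl

theorem not_singFam_of (G : Subalgebra (PowerSeries K) (Polynomial (PowerSeries K)))
    (r l o : ℕ) (hl : 1 ≤ l) (ho : o ≤ r * l) (u : (PowerSeries K)ˣ)
    (hG : (C (PowerSeries.X ^ o * (u : PowerSeries K)) * X ^ l : Polynomial (PowerSeries K)) ∈ G) :
    ¬ SingFam (tId K) ((transformFam PowerSeries.X)^[r] (idealFam G)) := by
  intro h
  have h1 : (1 : PowerSeries K) ∈ (transformFam PowerSeries.X)^[r] (idealFam G) l := by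
    rw [mem_iterate_transform, one_mul]
    rw [← mem_idealFam] at hG
    have : (PowerSeries.X : PowerSeries K) ^ (r * l) =
        (((u⁻¹ : (PowerSeries K)ˣ) : PowerSeries K) * PowerSeries.X ^ (r * l - o)) * (PowerSeries.X ^ o * (u : PowerSeries K)) := by
      calc (PowerSeries.X : PowerSeries K) ^ (r * l)
          = PowerSeries.X ^ (r * l - o) * PowerSeries.X ^ o * (((u⁻¹ : (PowerSeries K)ˣ) : PowerSeries K) * (u : PowerSeries K)) := by
            rw [← pow_add, Nat.sub_add_cancel ho, Units.inv_mul, mul_one]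
        _ = _ := by ring
    rw [this]
    exact Ideal.mul_mem_left _ _ hG
  have h2 := h l hl h1
  rw [mem_tId_pow] at h2
  have := X_pow_dvd_X_pow_mul_unit 0 l (1 : (PowerSeries K)ˣ)
  simp only [pow_zero, Units.val_one, mul_one] at this
  have := this.1 h2
  omega

theorem persist_le (G : Subalgebra (PowerSeries K) (Polynomial (PowerSeries K)))
    (r l o : ℕ) (hl : 1 ≤ l) (ho : o ≤ r * l) (u : (PowerSeries K)ˣ)
    (hG : (C (PowerSeries.X ^ o * (u : PowerSeries K)) * X ^ l : Polynomial (PowerSeries K)) ∈ G) :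
    persist (tId K) PowerSeries.X G ≤ r :=
  Nat.sInf_le (not_singFam_of G r l o hl ho u hG)

theorem le_persist (G : Subalgebra (PowerSeries K) (Polynomial (PowerSeries K)))
    (r : ℕ) (hG : ∀ (f : PowerSeries K) (l : ℕ), 1 ≤ l →
      (C f * X ^ l : Polynomial (PowerSeries K)) ∈ G → PowerSeries.X ^ (r * l) ∣ f)
    (F : PowerSeries K) (hF : F ≠ 0) (hFG : (C F * X : Polynomial (PowerSeries K)) ∈ G) :
    r ≤ persist (tId K) PowerSeries.X G := by
  obtain ⟨o, u, hu⟩ := exists_X_pow_mul_unit hF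
  have hne : {κ : ℕ | ¬ SingFam (tId K) ((transformFam PowerSeries.X)^[κ] (idealFam G))}.Nonempty := by
    refine ⟨o, not_singFam_of G o 1 o le_rfl (by simp) u ?_⟩
    rw [← hu, pow_one]; exact hFG
  refine le_csInf hne ?_
  intro κ hκ
  by_contra hlt
  push Not at hlt
  apply hκ
  intro l hl f hf
  rw [mem_iterate_transform, mem_idealFam] at hf
  have h1 := hG _ l hl hf
  rw [mem_tId_pow]
  have h2 : l + κ * l ≤ r * l := by nlinarith
  have h3 := (pow_dvd_pow _ h2).trans h1
  rw [pow_add] at h3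
  exact (mul_dvd_mul_iff_right (pow_ne_zero _ PowerSeries.X_ne_zero)).1 h3

end persistence


section explicitArc

theorem idealOfVars_eq_mPoly (k : Type) [Field k] (d : ℕ) :
    MvPolynomial.idealOfVars (Fin d) k = mPoly k d := by
  ext p
  have h := MvPolynomial.mem_pow_idealOfVars_iff' (σ := Fin d) (R := k) 1 p
  rw [pow_one] at h
  rw [h, mPoly, RingHom.mem_ker]
  have h2 : (MvPolynomial.aeval (fun _ => (0 : k)) : MvPolynomial (Fin d) k →ₐ[k] k) p
      = MvPolynomial.coeff 0 p := by
    rw [← MvPolynomial.constantCoeff_eq]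
    rw [MvPolynomial.aeval_zero']
    simp
  rw [h2]
  constructor
  · intro H; exact H 0 (by simp)
  · intro H x hx
    have : x = 0 := by
      rw [← Finsupp.degree_eq_zero_iff]; omega
    rw [this, H]

theorem mem_mPoly_pow {k : Type} [Field k] {d : ℕ} (n : ℕ) (p : MvPolynomial (Fin d) k) :
    p ∈ mPoly k d ^ n ↔ ∀ x : Fin d →₀ ℕ, x.degree < n → MvPolynomial.coeff x p = 0 := by
  rw [← idealOfVars_eq_mPoly, MvPolynomial.mem_pow_idealOfVars_iff']

/-- field of coefficients of the explicit arc -/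
abbrev K0 (k : Type) [Field k] (d : ℕ) : Type := FractionRing (MvPolynomial (Fin d) k)

/-- the explicit arc on the polynomial ring -/
def psi0 (k : Type) [Field k] (d M : ℕ) :
    MvPolynomial (Fin d) k →ₐ[k] PowerSeries (K0 k d) :=
  MvPolynomial.aeval (fun j => PowerSeries.C (algebraMap (MvPolynomial (Fin d) k) (K0 k d)
    (MvPolynomial.X j)) * PowerSeries.X ^ M)

theorem psi0_monomial (k : Type) [Field k] (d M : ℕ) (x : Fin d →₀ ℕ) (r : k) :
    psi0 k d M (MvPolynomial.monomial x r) =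
      PowerSeries.C (algebraMap (MvPolynomial (Fin d) k) (K0 k d) (MvPolynomial.monomial x r))
        * PowerSeries.X ^ (M * x.degree) := by
  rw [psi0, MvPolynomial.aeval_monomial, MvPolynomial.monomial_eq, Finsupp.prod, Finsupp.prod]
  simp only [mul_pow, Finset.prod_mul_distrib, map_mul, map_prod, map_pow, ← pow_mul]
  rw [Finset.prod_pow_eq_pow_sum, ← Finset.mul_sum, ← mul_assoc, Finsupp.degree]
  congr 2
  rw [← MvPolynomial.algebraMap_eq, ← IsScalarTower.algebraMap_apply,
    PowerSeries.algebraMap_apply]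

theorem coeff_psi0 (k : Type) [Field k] (d M : ℕ) (hM : 1 ≤ M) (p : MvPolynomial (Fin d) k)
    (n : ℕ) : PowerSeries.coeff (M * n) (psi0 k d M p) =
      algebraMap (MvPolynomial (Fin d) k) (K0 k d) (MvPolynomial.homogeneousComponent n p) := by
  induction p using MvPolynomial.induction_on' with
  | add p q hp hq => rw [map_add, map_add, map_add, map_add, hp, hq]
  | monomial x r =>
    rw [psi0_monomial, PowerSeries.coeff_C_mul, PowerSeries.coeff_X_pow,
      MvPolynomial.homogeneousComponent_of_mem (MvPolynomial.isHomogeneous_monomial r rfl)]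
    by_cases h : n = x.degree
    · rw [if_pos (by rw [h]), if_pos h, mul_one]
    · rw [if_neg, if_neg h, mul_zero, map_zero]
      intro h'
      exact h (Nat.eq_of_mul_eq_mul_left (by omega) h')

theorem map_mS_pow {k : Type} [Field k] {d : ℕ} {S : Type} [CommRing S]
    [Algebra (MvPolynomial (Fin d) k) S] {A : Type} [CommRing A] (Φ : S →+* A) (J : Ideal A)
    (h : ∀ j, Φ (zvar k d S j) ∈ J) (n : ℕ) (s : S) (hs : s ∈ mS k d S ^ n) : Φ s ∈ J ^ n := by
  have h1 : (mS k d S).map Φ ≤ J := by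
    rw [mS, Ideal.map_map, ← idealOfVars_eq_mPoly, MvPolynomial.idealOfVars, Ideal.map_span,
      Ideal.span_le]
    rintro _ ⟨_, ⟨j, rfl⟩, rfl⟩
    exact h j
  have h2 := Ideal.mem_map_of_mem Φ hs
  rw [Ideal.map_pow] at h2
  exact Ideal.pow_right_mono h1 n h2

theorem psi0_mem (k : Type) [Field k] (d M : ℕ) (n : ℕ) (p : MvPolynomial (Fin d) k)
    (hp : p ∈ mPoly k d ^ n) : PowerSeries.X ^ (M * n) ∣ psi0 k d M p := by
  have h1 : (mPoly k d).map (psi0 k d M : MvPolynomial (Fin d) k →+* PowerSeries (K0 k d))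
      ≤ Ideal.span {PowerSeries.X ^ M} := by
    rw [← idealOfVars_eq_mPoly, MvPolynomial.idealOfVars, Ideal.map_span, Ideal.span_le]
    rintro _ ⟨_, ⟨j, rfl⟩, rfl⟩
    rw [SetLike.mem_coe, Ideal.mem_span_singleton]
    simp [psi0]
  have h2 := Ideal.mem_map_of_mem (psi0 k d M : MvPolynomial (Fin d) k →+* PowerSeries (K0 k d)) hp
  rw [Ideal.map_pow] at h2
  have h3 := Ideal.pow_right_mono h1 n h2
  rw [Ideal.span_singleton_pow, Ideal.mem_span_singleton, ← pow_mul] at h3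
  exact h3

theorem psi0_form (k : Type) [Field k] (d M : ℕ) (hM : 1 ≤ M) (p : MvPolynomial (Fin d) k)
    (n : ℕ) (hp : p ∈ mPoly k d ^ n) (hp' : p ∉ mPoly k d ^ (n + 1)) :
    ∃ u : (PowerSeries (K0 k d))ˣ, psi0 k d M p = PowerSeries.X ^ (M * n) * (u : PowerSeries (K0 k d)) := by
  obtain ⟨q, hq⟩ := psi0_mem k d M n p hp
  have h1 := coeff_psi0 k d M hM p n
  rw [hq, PowerSeries.coeff_X_pow_mul'] at h1
  simp only [le_refl, if_true, Nat.sub_self] at h1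
  have h2 : MvPolynomial.homogeneousComponent n p ≠ 0 := by
    intro h0
    apply hp'
    rw [mem_mPoly_pow] at hp ⊢
    intro x hx
    rcases Nat.lt_or_ge x.degree n with h | h
    · exact hp x h
    · have hxn : x.degree = n := by omega
      have := MvPolynomial.coeff_homogeneousComponent n p x
      rw [h0, if_pos hxn] at this
      simpa using this.symm
  have h3 : IsUnit q := by
    rw [PowerSeries.isUnit_iff_constantCoeff, isUnit_iff_ne_zero,
      ← PowerSeries.coeff_zero_eq_constantCoeff_apply, h1]
    intro h
    exact h2 ((IsFractionRing.injective (MvPolynomial (Fin d) k) (K0 k d)) (by rw [h, map_zero]))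
  exact ⟨h3.unit, by rw [hq]; rfl⟩

theorem exists_order_poly {k : Type} [Field k] {d : ℕ} (p : MvPolynomial (Fin d) k) (hp : p ≠ 0) :
    ∃ n, p ∈ mPoly k d ^ n ∧ p ∉ mPoly k d ^ (n + 1) := by
  have hex : ∃ n, p ∉ mPoly k d ^ n := by
    obtain ⟨x, hx⟩ := MvPolynomial.ne_zero_iff.1 hp
    refine ⟨x.degree + 1, fun h => hx ?_⟩
    rw [mem_mPoly_pow] at h
    exact h x (by omega)
  classical
  have h1 := Nat.find_spec hex
  have h0 : Nat.find hex ≠ 0 := by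
    intro h; rw [h] at h1; simp at h1
  obtain ⟨n, hn⟩ := Nat.exists_eq_succ_of_ne_zero h0
  refine ⟨n, ?_, by rw [hn] at h1; exact h1⟩
  by_contra h
  have := Nat.find_min' hex h
  omega

theorem exists_psi (k : Type) [Field k] (d M : ℕ) (hM : 1 ≤ M)
    (S : Type) [CommRing S] [IsDomain S] [Algebra (MvPolynomial (Fin d) k) S]
    [Algebra k S] [IsScalarTower k (MvPolynomial (Fin d) k) S] [IsSLoc k d S] :
    ∃ ψ : S →ₐ[k] PowerSeries (K0 k d), Function.Injective ψ ∧
      (∀ j, ∃ u : (PowerSeries (K0 k d))ˣ, ψ (zvar k d S j) = PowerSeries.X ^ M * (u : PowerSeries (K0 k d))) ∧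
      ∀ g : S, g ≠ 0 → (∃ N, g ∉ mS k d S ^ N) ∧ ∃ u : (PowerSeries (K0 k d))ˣ,
        ψ g = PowerSeries.X ^ (M * adicOrder (mS k d S) g) * (u : PowerSeries (K0 k d)) := by
  have hunit : ∀ y : (mPoly k d).primeCompl, IsUnit (psi0 k d M (y : MvPolynomial (Fin d) k)) := by
    intro y
    obtain ⟨u, hu⟩ := psi0_form k d M hM y 0 (by simp) (by
      rw [zero_add, pow_one]; exact y.2)
    rw [hu, mul_zero, pow_zero, one_mul]
    exact u.isUnit
  let ψ : S →ₐ[k] PowerSeries (K0 k d) := IsLocalization.liftAlgHom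
    (M := (mPoly k d).primeCompl) (f := psi0 k d M) hunit
  have hψ : ∀ p, ψ (algebraMap (MvPolynomial (Fin d) k) S p) = psi0 k d M p := by
    intro p
    exact IsLocalization.lift_eq (M := (mPoly k d).primeCompl) hunit p
  have hz : ∀ j, ∃ u : (PowerSeries (K0 k d))ˣ, ψ (zvar k d S j) = PowerSeries.X ^ M * (u : PowerSeries (K0 k d)) := by
    intro j
    obtain ⟨u, hu⟩ := psi0_form k d M hM (MvPolynomial.X j) 1 (by
      rw [mem_mPoly_pow]
      intro x hx
      have : x = 0 := by
        rw [← Finsupp.degree_eq_zero_iff]; omega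
      rw [this]; simp) (by
      rw [mem_mPoly_pow]
      intro h
      have := h (Finsupp.single j 1) (by simp)
      simp at this)
    exact ⟨u, by rw [zvar, hψ, hu, mul_one]⟩
  have hmem : ∀ n g, g ∈ mS k d S ^ n → PowerSeries.X ^ (M * n) ∣ ψ g := by
    intro n g hg
    have := map_mS_pow (ψ : S →+* PowerSeries (K0 k d)) (Ideal.span {PowerSeries.X ^ M}) (by
      intro j
      obtain ⟨u, hu⟩ := hz j
      rw [Ideal.mem_span_singleton]
      exact ⟨u, hu⟩) n g hg
    rw [Ideal.span_singleton_pow, Ideal.mem_span_singleton, ← pow_mul] at this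
    exact this
  have key : ∀ g : S, g ≠ 0 → (∃ N, g ∉ mS k d S ^ N) ∧ ∃ u : (PowerSeries (K0 k d))ˣ,
        ψ g = PowerSeries.X ^ (M * adicOrder (mS k d S) g) * (u : PowerSeries (K0 k d)) := by
    intro g hg
    obtain ⟨⟨p, s⟩, hps⟩ := IsLocalization.surj (mPoly k d).primeCompl g
    simp only at hps
    have hsu : IsUnit (algebraMap (MvPolynomial (Fin d) k) S s) :=
      IsLocalization.map_units S s
    have hp0 : p ≠ 0 := by
      rintro rfl
      rw [map_zero] at hps
      rcases mul_eq_zero.1 hps with h | h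
      · exact hg h
      · exact hsu.ne_zero h
    obtain ⟨n, hn, hn'⟩ := exists_order_poly p hp0
    obtain ⟨u, hu⟩ := psi0_form k d M hM p n hn hn'
    have hψg : ψ g = PowerSeries.X ^ (M * n) * ((u * (hunit s).unit⁻¹ : (PowerSeries (K0 k d))ˣ) :
        PowerSeries (K0 k d)) := by
      have h1 := congrArg ψ hps
      rw [map_mul, hψ, hψ, hu] at h1
      rw [Units.val_mul, ← mul_assoc, ← h1, mul_assoc]
      rw [IsUnit.mul_val_inv, mul_one]
    have hgn : g ∈ mS k d S ^ n := by
      rw [← Ideal.mul_unit_mem_iff_mem _ hsu, hps, mS, ← Ideal.map_pow]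
      exact Ideal.mem_map_of_mem _ hn
    have hgn' : g ∉ mS k d S ^ (n + 1) := by
      intro h
      have := hmem _ _ h
      rw [hψg, X_pow_dvd_X_pow_mul_unit] at this
      nlinarith
    have hex : ∃ N, g ∉ mS k d S ^ N := ⟨_, hgn'⟩
    have hord : adicOrder (mS k d S) g = n := by
      apply le_antisymm
      · by_contra h
        exact hgn' ((mem_pow_iff_le_adicOrder _ _ hex _).2 (by omega))
      · exact (mem_pow_iff_le_adicOrder _ _ hex _).1 hgn
    exact ⟨hex, _, by rw [hord]; exact hψg⟩
  refine ⟨ψ, ?_, hz, key⟩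
  rw [injective_iff_map_eq_zero]
  intro g hg
  by_contra h
  obtain ⟨_, u, hu⟩ := key g h
  rw [hg] at hu
  exact mul_ne_zero (pow_ne_zero _ PowerSeries.X_ne_zero) u.ne_zero hu.symm

end explicitArc


section mainLemmas

theorem theta_bound {K : Type} [Field K] (o : ℕ) (u : (PowerSeries K)ˣ)
    (b : ℕ) (β : ℕ → PowerSeries K)
    (heq : (PowerSeries.X ^ o * (u : PowerSeries K)) ^ b + ∑ j ∈ Finset.range (b - 1),
      β j * (PowerSeries.X ^ o * (u : PowerSeries K)) ^ j = 0)
    (A c : ℕ) (hc : 1 ≤ c)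
    (hβ : ∀ j ∈ Finset.range (b - 1), PowerSeries.X ^ (ceilF A c (b - j)) ∣ β j) : A ≤ c * o := by
  by_contra hlt
  push Not at hlt
  have h1 : PowerSeries.X ^ (o * b + 1) ∣ ∑ j ∈ Finset.range (b - 1),
      β j * (PowerSeries.X ^ o * (u : PowerSeries K)) ^ j := by
    refine Finset.dvd_sum fun j hj => ?_
    have hjb : j < b - 1 := Finset.mem_range.1 hj
    have h2 : PowerSeries.X ^ (ceilF A c (b - j) + o * j) ∣
        β j * (PowerSeries.X ^ o * (u : PowerSeries K)) ^ j := by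
      rw [pow_add]
      refine mul_dvd_mul (hβ j hj) ?_
      rw [mul_pow, ← pow_mul]
      exact dvd_mul_right _ _
    refine (pow_dvd_pow _ ?_).trans h2
    obtain ⟨l, hl⟩ : ∃ l, b = j + l := ⟨b - j, by omega⟩
    have hl1 : 1 ≤ l := by omega
    have h3 := le_ceilF (a := A) hc (b - j)
    have h4 : b - j = l := by omega
    rw [h4] at h3 ⊢
    have h5 : o * l < ceilF A c l := by
      have : c * (o * l) < c * ceilF A c l := by nlinarith
      exact Nat.lt_of_mul_lt_mul_left this
    rw [hl, mul_add]
    omega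
  have h2 : PowerSeries.X ^ (o * b + 1) ∣ (PowerSeries.X ^ o * (u : PowerSeries K)) ^ b := by
    rw [eq_neg_of_add_eq_zero_left heq]
    exact (dvd_neg).2 h1
  rw [mul_pow, ← pow_mul, ← Units.val_pow_eq_pow_val, X_pow_dvd_X_pow_mul_unit] at h2
  omega

variable {k : Type} [Field k] {d : ℕ} {S : Type} [CommRing S] [IsDomain S]
  [Algebra (MvPolynomial (Fin d) k) S] [Algebra k S]
  [IsScalarTower k (MvPolynomial (Fin d) k) S] [IsSLoc k d S]

theorem exists_not_mem_pow (g : S) (hg : g ≠ 0) : ∃ N, g ∉ mS k d S ^ N := by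
  obtain ⟨_, _, _, h⟩ := exists_psi k d 1 le_rfl S
  exact (h g hg).1

theorem exists_min (P : Presentation k d S) : ∃ i0 j0, j0 ≤ P.b i0 - 2 ∧ P.Bc i0 j0 ≠ 0 ∧
    ∀ i, ∀ j ≤ P.b i - 2, P.Bc i j ∈ mS k d S ^
      (ceilF (adicOrder (mS k d S) (P.Bc i0 j0)) (P.b i0 - j0) (P.b i - j)) := by
  classical
  let T : Finset (Σ _ : Fin P.e, ℕ) :=
    ((Finset.univ : Finset (Fin P.e)).sigma fun i => Finset.range (P.b i - 1)).filter
      fun x => P.Bc x.1 x.2 ≠ 0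
  have hT : T.Nonempty := by
    obtain ⟨i, j, hj, h⟩ := P.hnz
    refine ⟨⟨i, j⟩, ?_⟩
    have := P.hb i
    simp only [T, Finset.mem_filter, Finset.mem_sigma, Finset.mem_univ, Finset.mem_range, true_and]
    exact ⟨by omega, h⟩
  obtain ⟨x, hx, hmin⟩ := Finset.exists_min_image T
    (fun x => (adicOrder (mS k d S) (P.Bc x.1 x.2) : ℚ) / ((P.b x.1 - x.2 : ℕ) : ℚ)) hT
  simp only [T, Finset.mem_filter, Finset.mem_sigma, Finset.mem_univ, Finset.mem_range,
    true_and] at hx hmin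
  have hbx := P.hb x.1
  refine ⟨x.1, x.2, by omega, hx.2, fun i j hj => ?_⟩
  by_cases h0 : P.Bc i j = 0
  · rw [h0]; exact zero_mem _
  have hbi := P.hb i
  rw [mem_pow_iff_le_adicOrder _ _ (exists_not_mem_pow _ h0), ceilF_le_iff (by omega)]
  have := hmin ⟨i, j⟩ ⟨by simp only; omega, h0⟩
  simp only at this
  rw [div_le_div_iff₀ (by exact_mod_cast (by omega : 0 < P.b x.1 - x.2))
    (by exact_mod_cast (by omega : 0 < P.b i - j))] at this
  rw [mul_comm (P.b x.1 - x.2)]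
  exact_mod_cast this

theorem gen_mem_elimAlg (P : Presentation k d S) (D : Fin d → Derivation k S S) (i : Fin P.e)
    (j : ℕ) (hj : j ≤ P.b i - 2) :
    (Polynomial.C (P.Bc i j) * Polynomial.X ^ (P.b i - j) : Polynomial S) ∈ elimAlg P D := by
  rw [elimAlg, diffClosure, Algebra.mem_sInf]
  rintro G ⟨h, -⟩
  exact h ⟨i, j, hj, rfl⟩

theorem mem_of_mem_elimAlg (P : Presentation k d S) (D : Fin d → Derivation k S S)
    (a c : ℕ) (hc : 1 ≤ c) (hac : c ≤ a)
    (hB : ∀ i, ∀ j ≤ P.b i - 2, P.Bc i j ∈ mS k d S ^ (ceilF a c (P.b i - j)))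
    (g : S) (l : ℕ) (hg : (Polynomial.C g * Polynomial.X ^ l : Polynomial S) ∈ elimAlg P D) :
    g ∈ mS k d S ^ ceilF a c l := by
  have hle : elimAlg P D ≤ filtAlg (mS k d S) (ceilF a c) (ceilF_zero hc) (ceilF_add hc) := by
    refine sInf_le ⟨?_, ?_, ?_, ?_⟩
    · rintro _ ⟨i, j, hj, rfl⟩
      rw [SetLike.mem_coe, monomial_mem_filtAlg]
      exact hB i j hj
    · intro p hp n
      rw [monomial_mem_filtAlg]
      exact hp n
    · intro f l _ hf
      rw [monomial_mem_filtAlg] at hf ⊢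
      have := ceilF_succ hc hac l
      exact Ideal.pow_le_pow_right (by omega) hf
    · intro f l j hf
      rw [monomial_mem_filtAlg] at hf ⊢
      have := ceilF_succ hc hac l
      exact derivation_mem_pow _ _ _ _ (Ideal.pow_le_pow_right this hf)
  exact (monomial_mem_filtAlg _ _ _ _ _ _).1 (hle hg)

theorem reesOrder_elimAlg (P : Presentation k d S) (D : Fin d → Derivation k S S)
    (a c : ℕ) (hc : 1 ≤ c) (hac : c ≤ a)
    (hB : ∀ i, ∀ j ≤ P.b i - 2, P.Bc i j ∈ mS k d S ^ (ceilF a c (P.b i - j)))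
    (g : S) (hg0 : g ≠ 0) (ha : adicOrder (mS k d S) g = a)
    (hg : (Polynomial.C g * Polynomial.X ^ c : Polynomial S) ∈ elimAlg P D) :
    reesOrder (mS k d S) (elimAlg P D) = (a : ℝ≥0∞) / (c : ℝ≥0∞) := by
  apply le_antisymm
  · exact sInf_le ⟨g, c, hg0, hc, hg, by rw [ha]⟩
  · refine le_sInf ?_
    rintro _ ⟨f, n, hf0, hn, hf, rfl⟩
    have h1 := mem_of_mem_elimAlg P D a c hc hac hB f n hf
    rw [mem_pow_iff_le_adicOrder _ _ (exists_not_mem_pow _ hf0), ceilF_le_iff hc] at h1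
    have hn0 : (n : ℝ≥0∞) ≠ 0 := by exact_mod_cast (by omega : n ≠ 0)
    have hc0 : (c : ℝ≥0∞) ≠ 0 := by exact_mod_cast (by omega : c ≠ 0)
    rw [ENNReal.div_le_iff hc0 (ENNReal.natCast_ne_top c), ← ENNReal.mul_div_right_comm,
      ENNReal.le_div_iff_mul_le (Or.inl hn0) (Or.inl (ENNReal.natCast_ne_top n))]
    rw [mul_comm c] at h1
    exact_mod_cast h1

theorem theta_eq (P : Presentation k d S) {K : Type} [Field K] [Algebra k K]
    (φ : BRing P →ₐ[k] PowerSeries K) (i : Fin P.e) :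
    φ (theta P i) ^ P.b i + ∑ j ∈ Finset.range (P.b i - 1),
      φ (algebraMap S (BRing P) (P.Bc i j)) * φ (theta P i) ^ j = 0 := by
  have h := congrArg φ (P.hroot i)
  rw [minPolyOf] at h
  simp only [map_add, map_sum, map_mul, map_pow, Polynomial.aeval_X, Polynomial.aeval_C,
    map_zero] at h
  exact h

theorem arc_mem (P : Presentation k d S) {K : Type} [Field K] [Algebra k K]
    (φ : BRing P →ₐ[k] PowerSeries K) (N : ℕ)
    (hz : ∀ j, PowerSeries.X ^ N ∣ φ (algebraMap S (BRing P) (zvar k d S j)))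
    (a c : ℕ) (hc : 1 ≤ c) (l : ℕ) (g : S) (hg : g ∈ mS k d S ^ ceilF a c l) :
    PowerSeries.X ^ (ceilF (a * N) c l) ∣ φ (algebraMap S (BRing P) g) := by
  have h := map_mS_pow ((φ : BRing P →+* PowerSeries K).comp (algebraMap S (BRing P)))
    (Ideal.span {PowerSeries.X ^ N}) (fun j => by
      rw [Ideal.mem_span_singleton]; exact hz j) _ g hg
  rw [Ideal.span_singleton_pow, Ideal.mem_span_singleton, ← pow_mul] at h
  refine (pow_dvd_pow _ ?_).trans h
  rw [ceilF_le_iff hc]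
  have := le_ceilF (a := a) hc l
  calc a * N * l = (a * l) * N := by ring
    _ ≤ (c * ceilF a c l) * N := Nat.mul_le_mul_right _ this
    _ = _ := by ring

theorem arc_theta_bound (P : Presentation k d S) {K : Type} [Field K] [Algebra k K]
    (φ : BRing P →ₐ[k] PowerSeries K) (N : ℕ)
    (hz : ∀ j, PowerSeries.X ^ N ∣ φ (algebraMap S (BRing P) (zvar k d S j)))
    (a c : ℕ) (hc : 1 ≤ c)
    (hB : ∀ i, ∀ j ≤ P.b i - 2, P.Bc i j ∈ mS k d S ^ (ceilF a c (P.b i - j)))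
    (i : Fin P.e) (h0 : φ (theta P i) ≠ 0) :
    a * N ≤ c * tOrd (φ (theta P i)) := by
  obtain ⟨o, u, hu⟩ := exists_X_pow_mul_unit h0
  have h := theta_eq P φ i
  rw [hu] at h ⊢
  rw [tOrd_eq]
  refine theta_bound o u _ _ h _ c hc ?_
  intro j hj
  have hj' := Finset.mem_range.1 hj
  have hb := P.hb i
  exact arc_mem P φ N hz a c hc _ _ (hB i j (by omega))

theorem contact_mem (P : Presentation k d S) (D : Fin d → Derivation k S S)
    {K : Type} [Field K] [Algebra k K]
    (φ : BRing P →ₐ[k] PowerSeries K) (N : ℕ)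
    (hz : ∀ j, PowerSeries.X ^ N ∣ φ (algebraMap S (BRing P) (zvar k d S j)))
    (a c : ℕ) (hc : 1 ≤ c) (hac : c ≤ a)
    (hB : ∀ i, ∀ j ≤ P.b i - 2, P.Bc i j ∈ mS k d S ^ (ceilF a c (P.b i - j)))
    (h0 : ∀ i, φ (theta P i) ≠ 0) (f : PowerSeries K) (l : ℕ)
    (hf : (C f * X ^ l : Polynomial (PowerSeries K)) ∈ contactAlg P D φ) :
    PowerSeries.X ^ (ceilF (a * N) c l) ∣ f := by
  have hle : contactAlg P D φ ≤ filtAlg (tId K) (ceilF (a * N) c) (ceilF_zero hc)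
      (ceilF_add hc) := by
    refine Algebra.adjoin_le ?_
    rintro p (⟨i, rfl⟩ | ⟨g, l, hg, _, rfl⟩)
    · have : (C (φ (theta P i)) * X : Polynomial (PowerSeries K)) =
        C (φ (theta P i)) * X ^ 1 := by rw [pow_one]
      simp only [SetLike.mem_coe]
      rw [this, monomial_mem_filtAlg, mem_tId_pow, ← le_tOrd_iff _ (h0 i), ceilF_le_iff hc, mul_one]
      exact arc_theta_bound P φ N hz a c hc hB i (h0 i)
    · rw [SetLike.mem_coe, monomial_mem_filtAlg, mem_tId_pow]
      exact arc_mem P φ N hz a c hc l g (mem_of_mem_elimAlg P D a c hc hac hB g l hg)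
  have := hle hf
  rwa [monomial_mem_filtAlg, mem_tId_pow] at this

theorem le_rho (P : Presentation k d S) (D : Fin d → Derivation k S S)
    {K : Type} [Field K] [Algebra k K]
    (φ : BRing P →ₐ[k] PowerSeries K) (N : ℕ)
    (hz : ∀ j, PowerSeries.X ^ N ∣ φ (algebraMap S (BRing P) (zvar k d S j)))
    (a c : ℕ) (hc : 1 ≤ c) (hac : c ≤ a)
    (hB : ∀ i, ∀ j ≤ P.b i - 2, P.Bc i j ∈ mS k d S ^ (ceilF a c (P.b i - j)))
    (h0 : ∀ i, φ (theta P i) ≠ 0) (r : ℕ) (hr : c * r ≤ a * N) : r ≤ rho P D φ := by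
  refine le_persist _ r ?_ (φ (theta P ⟨0, P.he⟩)) (h0 _)
    (Algebra.subset_adjoin (Or.inl ⟨_, rfl⟩))
  intro f l _ hf
  refine (pow_dvd_pow _ ?_).trans (contact_mem P D φ N hz a c hc hac hB h0 f l hf)
  have := le_ceilF (a := a * N) hc l
  have h2 : c * (r * l) ≤ c * ceilF (a * N) c l := by
    calc c * (r * l) = (c * r) * l := by ring
      _ ≤ (a * N) * l := Nat.mul_le_mul_right _ hr
      _ ≤ _ := this
  exact Nat.le_of_mul_le_mul_left h2 (by omega)

theorem Bc_zero_ne (P : Presentation k d S) (i : Fin P.e) : P.Bc i 0 ≠ 0 := by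
  intro h0
  have hb := P.hb i
  have hirr := P.hirr i
  set F := (minPolyOf (P.b i) (P.Bc i)).map (algebraMap S (FractionRing S)) with hF
  have hX : (X : Polynomial (FractionRing S)) ∣ F := by
    rw [Polynomial.X_dvd_iff, hF, Polynomial.coeff_map, minPolyOf, Polynomial.coeff_add,
      Polynomial.finsetSum_coeff, Polynomial.coeff_X_pow, if_neg (by omega), zero_add]
    rw [Finset.sum_eq_zero, map_zero]
    intro j _
    rw [Polynomial.coeff_C_mul_X_pow]
    split_ifs with hj
    · rw [← hj, h0]
    · rfl
  have hassoc : Associated (X : Polynomial (FractionRing S)) F :=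
    Polynomial.irreducible_X.associated_of_dvd hirr hX
  have hdeg := Polynomial.natDegree_eq_of_degree_eq (Polynomial.degree_eq_degree_of_associated hassoc)
  rw [Polynomial.natDegree_X] at hdeg
  have hcoeff : F.coeff (P.b i) = 1 := by
    rw [hF, Polynomial.coeff_map, minPolyOf, Polynomial.coeff_add,
      Polynomial.finsetSum_coeff, Polynomial.coeff_X_pow, if_pos rfl]
    rw [Finset.sum_eq_zero, add_zero, map_one]
    intro j hj
    have := Finset.mem_range.1 hj
    rw [Polynomial.coeff_C_mul_X_pow, if_neg (by omega)]
  have : F.coeff (P.b i) = 0 := Polynomial.coeff_eq_zero_of_natDegree_lt (by omega)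
  rw [hcoeff] at this
  exact one_ne_zero this

/-- the extremal arc -/
theorem exists_arc [CharZero k] (hd : 1 ≤ d) (P : Presentation k d S)
    (D : Fin d → Derivation k S S)
    (a c : ℕ) (hc : 1 ≤ c) (hac : c ≤ a)
    (hB : ∀ i, ∀ j ≤ P.b i - 2, P.Bc i j ∈ mS k d S ^ (ceilF a c (P.b i - j)))
    (g : S) (hg0 : g ≠ 0) (ha : adicOrder (mS k d S) g = a)
    (hg : (Polynomial.C g * Polynomial.X ^ c : Polynomial S) ∈ elimAlg P D) :
    ∃ (K : Type) (_ : Field K) (_ : Algebra k K) (φ : BRing P →ₐ[k] PowerSeries K) (e : ℕ),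
      1 ≤ e ∧ IsArc P φ ∧ rho P D φ = a * e ∧ arcOrd P φ = e * c := by
  obtain ⟨ψ, hinj, hψz, hψ⟩ := exists_psi k d c hc S
  have := P.hprime
  have := P.hfinite
  have : IsDomain (BRing P) := Ideal.Quotient.isDomain P.I
  obtain ⟨K, iF, iA, φ, e, he, hφ⟩ := arc_extend k S (BRing P) P.hinj (K0 k d) ψ hinj
  have hne : ∀ (n : ℕ) (u : (PowerSeries K)ˣ), PowerSeries.X ^ n * (u : PowerSeries K) ≠ 0 :=
    fun n u => mul_ne_zero (pow_ne_zero _ PowerSeries.X_ne_zero) u.ne_zero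
  have hz : ∀ j, ∃ u : (PowerSeries K)ˣ, φ (algebraMap S (BRing P) (zvar k d S j)) =
      PowerSeries.X ^ (e * c) * (u : PowerSeries K) := fun j => hφ _ _ (hψz j)
  have hord : ∀ f : S, f ≠ 0 → ∃ u : (PowerSeries K)ˣ, φ (algebraMap S (BRing P) f) =
      PowerSeries.X ^ (e * (c * adicOrder (mS k d S) f)) * (u : PowerSeries K) :=
    fun f hf => hφ _ _ (hψ f hf).2
  have hz' : ∀ j, PowerSeries.X ^ (e * c) ∣ φ (algebraMap S (BRing P) (zvar k d S j)) := by
    intro j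
    obtain ⟨u, hu⟩ := hz j
    exact ⟨u, hu⟩
  have hθ : ∀ i, φ (theta P i) ≠ 0 := by
    intro i h0
    have hb := P.hb i
    have h := theta_eq P φ i
    rw [h0, zero_pow (by omega), zero_add, Finset.sum_eq_single 0, pow_zero, mul_one] at h
    · obtain ⟨u, hu⟩ := hord _ (Bc_zero_ne P i)
      exact hne _ _ (hu.symm.trans h)
    · intro j _ hj
      rw [zero_pow hj, mul_zero]
    · intro hn
      exact absurd (Finset.mem_range.2 (by omega)) hn
  have hθo : ∀ i, e * c ≤ tOrd (φ (theta P i)) := by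
    intro i
    have h1 := arc_theta_bound P φ (e * c) hz' a c hc hB i (hθ i)
    have h2 : c * (e * c) ≤ c * tOrd (φ (theta P i)) :=
      (Nat.mul_le_mul_right _ hac).trans h1
    exact Nat.le_of_mul_le_mul_left h2 (by omega)
  have hec : 1 ≤ e * c := Nat.mul_pos he hc
  refine ⟨K, iF, iA, φ, e, he, ⟨?_, ?_, hθ, ?_⟩, ?_, ?_⟩
  · intro s hs
    have h := map_mS_pow ((φ : BRing P →+* PowerSeries K).comp (algebraMap S (BRing P)))
      (tId K) (fun j => by
        have := (mem_tId_pow (φ (algebraMap S (BRing P) (zvar k d S j))) 1).2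
          ((pow_dvd_pow _ hec).trans (hz' j))
        rwa [pow_one] at this) 1 s (by rwa [pow_one])
    rwa [pow_one] at h
  · intro i
    have := (mem_tId_pow (φ (theta P i)) 1).2 ((le_tOrd_iff _ (hθ i) 1).1 (hec.trans (hθo i)))
    rwa [pow_one] at this
  · intro j
    obtain ⟨u, hu⟩ := hz j
    rw [hu]
    exact hne _ _
  · apply le_antisymm
    · obtain ⟨u, hu⟩ := hord g hg0
      rw [ha] at hu
      refine persist_le _ (a * e) c (e * (c * a)) hc (le_of_eq (by ring)) u ?_
      rw [← hu]
      exact Algebra.subset_adjoin (Or.inr ⟨g, c, hg, by rw [hu]; exact hne _ _, rfl⟩)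
    · exact le_rho P D φ (e * c) hz' a c hc hac hB hθ _ (le_of_eq (by ring))
  · apply le_antisymm
    · obtain ⟨u, hu⟩ := hz ⟨0, hd⟩
      refine Nat.sInf_le (Or.inr ⟨⟨0, hd⟩, ?_⟩)
      simp only
      rw [hu, tOrd_eq]
    · refine le_csInf ⟨_, Or.inl ⟨⟨0, P.he⟩, rfl⟩⟩ ?_
      rintro _ (⟨i, rfl⟩ | ⟨j, rfl⟩)
      · exact hθo i
      · obtain ⟨u, hu⟩ := hz j
        simp only
        rw [hu, tOrd_eq]

theorem arcOrd_props (P : Presentation k d S) {K : Type} [Field K] [Algebra k K]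
    (φ : BRing P →ₐ[k] PowerSeries K) (h : IsArc P φ) :
    1 ≤ arcOrd P φ ∧
      ∀ j, PowerSeries.X ^ (arcOrd P φ) ∣ φ (algebraMap S (BRing P) (zvar k d S j)) := by
  obtain ⟨h1, h2, h3, h4⟩ := h
  constructor
  · refine le_csInf ⟨_, Or.inl ⟨⟨0, P.he⟩, rfl⟩⟩ ?_
    rintro _ (⟨i, rfl⟩ | ⟨j, rfl⟩)
    · simp only
      rw [le_tOrd_iff _ (h3 i), ← mem_tId_pow, pow_one]
      exact h2 i
    · simp only
      rw [le_tOrd_iff _ (h4 j), ← mem_tId_pow, pow_one]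
      refine h1 _ (Ideal.mem_map_of_mem _ ?_)
      simp [mPoly, RingHom.mem_ker]
  · intro j
    rw [← le_tOrd_iff _ (h4 j)]
    exact Nat.sInf_le (Or.inr ⟨j, rfl⟩)

end mainLemmas


/-- (Theorem `thm:main_order-rho`.)  (i) For every arc `φ` in `X` through `ξ`,
`ρ_{X,φ} ≥ ⌊ord(G_X^{(d)})⌋ · ord(φ)`; (ii) the infimum over all arcs `φ` of
`⌊ρ_{X,φ}/ord(φ)⌋` equals `⌊ord(G_X^{(d)})⌋`; (iii) there is an arc `φ₀` with
`ρ_{X,φ₀}/ord(φ₀) = ord(G_X^{(d)})`. -/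
theorem persistance_bounds_via_elimination_order
    (k : Type) [Field k] [CharZero k] (d : ℕ) (hd : 1 ≤ d)
    (S : Type) [CommRing S] [IsDomain S] [Algebra (MvPolynomial (Fin d) k) S]
    [Algebra k S] [IsScalarTower k (MvPolynomial (Fin d) k) S] [IsSLoc k d S]
    (D : Fin d → Derivation k S S)
    (hD : ∀ i j : Fin d, D j (zvar k d S i) = if i = j then 1 else 0)
    (P : Presentation k d S) :
    (∀ (K : Type) (_ : Field K) (_ : Algebra k K)
        (φ : BRing P →ₐ[k] PowerSeries K), IsArc P φ →
        Nat.floor (reesOrder (mS k d S) (elimAlg P D)).toReal * arcOrd P φ ≤ rho P D φ) ∧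
    sInf {n : ℕ | ∃ (K : Type) (_ : Field K) (_ : Algebra k K)
        (φ : BRing P →ₐ[k] PowerSeries K), IsArc P φ ∧ n = rho P D φ / arcOrd P φ} =
      Nat.floor (reesOrder (mS k d S) (elimAlg P D)).toReal ∧
    ∃ (K : Type) (_ : Field K) (_ : Algebra k K)
      (φ : BRing P →ₐ[k] PowerSeries K), IsArc P φ ∧
      (rho P D φ : ℝ≥0∞) / (arcOrd P φ : ℝ≥0∞) = reesOrder (mS k d S) (elimAlg P D) := by
  obtain ⟨i0, j0, hj0, hne, hB⟩ := exists_min P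
  have hb0 := P.hb i0
  have hc : 1 ≤ P.b i0 - j0 := by omega
  have hac : P.b i0 - j0 ≤ adicOrder (mS k d S) (P.Bc i0 j0) :=
    (mem_pow_iff_le_adicOrder _ _ (exists_not_mem_pow _ hne) _).1 (P.hmem i0 j0 hj0)
  have hg := gen_mem_elimAlg P D i0 j0 hj0
  have hord := reesOrder_elimAlg P D _ _ hc hac hB _ hne rfl hg
  obtain ⟨K, iF, iA, φ₀, e, he, hφ₀, hrho, harc⟩ := exists_arc hd P D _ _ hc hac hB _ hne rfl hg
  generalize adicOrder (mS k d S) (P.Bc i0 j0) = a at *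
  generalize P.b i0 - j0 = c at *
  have hfloor : Nat.floor (reesOrder (mS k d S) (elimAlg P D)).toReal = a / c := by
    rw [hord, ENNReal.toReal_div, ENNReal.toReal_natCast, ENNReal.toReal_natCast,
      Nat.floor_div_eq_div]
  rw [hfloor]
  have hi : ∀ (K : Type) (_ : Field K) (_ : Algebra k K)
        (φ : BRing P →ₐ[k] PowerSeries K), IsArc P φ → a / c * arcOrd P φ ≤ rho P D φ := by
    intro K _ _ φ hφ
    obtain ⟨_, hz⟩ := arcOrd_props P φ hφ
    refine le_rho P D φ _ hz a c hc hac hB hφ.2.2.1 _ ?_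
    rw [← mul_assoc]
    exact Nat.mul_le_mul_right _ (Nat.mul_div_le a c)
  refine ⟨hi, ?_, K, iF, iA, φ₀, hφ₀, ?_⟩
  · apply le_antisymm
    · refine Nat.sInf_le ⟨K, iF, iA, φ₀, hφ₀, ?_⟩
      rw [hrho, harc, mul_comm a e, Nat.mul_div_mul_left _ _ (by omega)]
    · refine le_csInf ⟨_, K, iF, iA, φ₀, hφ₀, rfl⟩ ?_
      rintro _ ⟨K, iF, iA, φ, hφ, rfl⟩
      rw [Nat.le_div_iff_mul_le (arcOrd_props P φ hφ).1]
      exact hi K iF iA φ hφ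
  · rw [hord, hrho, harc]
    push_cast
    rw [mul_comm (a : ℝ≥0∞), ENNReal.mul_div_mul_left]
    · exact_mod_cast (by omega : e ≠ 0)
    · exact ENNReal.natCast_ne_top e

end NashMult
end
end
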